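/- arXiv:math/0401252 — 2 statements merged into one kernel-verified Lean document; each statement's English description precedes it below -/
import Mathlib

section
/- For each integer k ≥ 1, as an identity of formal power series (or for |q|<1 and suitable a,b,z): Σ_{λ: l(λ) ≤ k} z^{|λ|} q^{2n(λ)} (a;q^{-1})_{λ_1} (b;q^{-1})_{λ_1} / ((-q;q)_{λ_k} (q;q)_λ) = ((-z/q;q)_∞ / (abz;q)_∞) Σ_{r ≥ 0} (-1)^r z^{kr} q^{r + (2k+2)binom(r,2)} (a;q^{-1})_r (b;q^{-1})_r (azq^r;q)_∞ (bzq^r;q)_∞ (1 - zq^{2r-1}) / ((q^2;q^2)_r (z^2 q^{2r-2};q^2)_∞). -/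
/-- Finite q-Pochhammer symbol `(x;q)_n = ∏_{k=0}^{n-1} (1 - x q^k)`. -/
noncomputable def qPoch (x q : ℂ) (n : ℕ) : ℂ := ∏ k ∈ Finset.range n, (1 - x * q ^ k)

/-- Infinite q-Pochhammer symbol `(x;q)_∞ = ∏_{k≥0} (1 - x q^k)`. -/
noncomputable def qPochInf (x q : ℂ) : ℂ := ∏' k : ℕ, (1 - x * q ^ k)

/-- Partitions with at most `k` (positive) parts: antitone sequences of naturals vanishing
from index `k` on; `l 0` is the largest part `λ_1`, and `l (k-1)` is `λ_k`. -/
def PartK (k : ℕ) : Type := {l : ℕ → ℕ // Antitone l ∧ ∀ i, k ≤ i → l i = 0}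

/-- `|λ| = Σ_i λ_i`. -/
def wtK (k : ℕ) (l : PartK k) : ℕ := ∑ i ∈ Finset.range k, l.1 i

/-- `n_2(λ) = Σ_i λ_i^2`. -/
def n2K (k : ℕ) (l : PartK k) : ℕ := ∑ i ∈ Finset.range k, (l.1 i) ^ 2

/-- `n(λ) = Σ_i binom(λ_i, 2)`. -/
def nK (k : ℕ) (l : PartK k) : ℕ := ∑ i ∈ Finset.range k, Nat.choose (l.1 i) 2

/-- `(x;q)_λ = ∏_{i=1}^{k} (x;q)_{λ_i - λ_{i+1}}` (with `λ_{k+1} = 0`). -/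
noncomputable def pochK (x q : ℂ) (k : ℕ) (l : PartK k) : ℂ :=
  ∏ i ∈ Finset.range k, qPoch x q (l.1 i - l.1 (i + 1))

/-! Peeling off the largest part of `λ` turns the sum over partitions into `∑ₙ δₙ βₙ`, where `δ` is
the weight `zⁿ q^(2 binom(n, 2)) (a; q⁻¹)ₙ (b; q⁻¹)ₙ` and `β` arises from `1 / (q²; q²)ₙ` by `k - 1`
steps of the Bailey chain. That seed sequence belongs to a Bailey pair relative to `z / q`, and each
step merely multiplies its `α` by `zʳ q^(r (r - 1))`. Exchanging the order of summation, the
coefficient of `αᵣ` is a conjugate Bailey sum, which the `q`-Gauss theorem evaluates.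
-/

open Filter Finset Topology

section qPochhammer

variable {x q : ℂ}

lemma qPoch_zero (x q : ℂ) : qPoch x q 0 = 1 := prod_range_zero _

lemma qPoch_succ (x q : ℂ) (n : ℕ) : qPoch x q (n + 1) = qPoch x q n * (1 - x * q ^ n) :=
  prod_range_succ _ n

lemma qPoch_add (x q : ℂ) (m n : ℕ) :
    qPoch x q (m + n) = qPoch x q m * qPoch (x * q ^ m) q n := by
  simp only [qPoch, prod_range_add, pow_add, mul_assoc]

lemma qPoch_succ' (x q : ℂ) (n : ℕ) : qPoch x q (n + 1) = (1 - x) * qPoch (x * q) q n := by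
  rw [add_comm, qPoch_add, qPoch_succ, qPoch_zero, one_mul, pow_zero, mul_one, pow_one]

lemma qPoch_zero_left (q : ℂ) (n : ℕ) : qPoch 0 q n = 1 := by simp [qPoch]

lemma qPoch_sq (x q : ℂ) (n : ℕ) : qPoch (x ^ 2) (q ^ 2) n = qPoch x q n * qPoch (-x) q n := by
  rw [qPoch, qPoch, qPoch, ← prod_mul_distrib]
  exact prod_congr rfl fun i _ => by ring

lemma qPoch_ne_zero (hx : ∀ n : ℕ, 1 - x * q ^ n ≠ 0) (n : ℕ) : qPoch x q n ≠ 0 :=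
  prod_ne_zero_iff.2 fun i _ => hx i

lemma one_sub_mul_pow_div_qPoch_succ {n : ℕ} (hn : 1 - x * q ^ n ≠ 0) :
    (1 - x * q ^ n) / qPoch x q (n + 1) = 1 / qPoch x q n := by
  rw [qPoch_succ, div_mul_cancel_right₀ hn, one_div]

lemma one_sub_mul_pow_mul_pow_ne_zero (hx : ∀ n : ℕ, 1 - x * q ^ n ≠ 0) (m n : ℕ) :
    1 - x * q ^ m * q ^ n ≠ 0 := by
  rw [mul_assoc, ← pow_add]
  exact hx (m + n)

lemma one_sub_sq_mul_sq_pow_ne_zero (hq : ∀ n : ℕ, 1 - q * q ^ n ≠ 0) (n : ℕ) :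
    1 - q ^ 2 * (q ^ 2) ^ n ≠ 0 := by
  convert hq (2 * n + 1) using 1
  ring

lemma norm_mul_pow_lt_one (hx : ‖x‖ < 1) (hq : ‖q‖ < 1) (n : ℕ) : ‖x * q ^ n‖ < 1 := by
  rw [norm_mul, norm_pow]
  exact mul_lt_one_of_nonneg_of_lt_one_left (norm_nonneg _) hx (pow_le_one₀ (norm_nonneg _) hq.le)

lemma one_sub_mul_pow_ne_zero (hx : ‖x‖ < 1) (hq : ‖q‖ < 1) (n : ℕ) : 1 - x * q ^ n ≠ 0 := by
  refine sub_ne_zero.2 fun h => (norm_mul_pow_lt_one hx hq n).ne ?_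
  rw [← h, norm_one]

lemma norm_sq_lt_one (hq : ‖q‖ < 1) : ‖q ^ 2‖ < 1 := by
  rw [norm_pow]
  exact pow_lt_one₀ (norm_nonneg _) hq two_ne_zero

lemma summable_norm_neg_mul_pow (x : ℂ) (hq : ‖q‖ < 1) : Summable fun k : ℕ => ‖-(x * q ^ k)‖ :=
  ((summable_geometric_of_norm_lt_one hq).mul_left x).neg.norm

lemma tendsto_qPoch (x : ℂ) (hq : ‖q‖ < 1) :
    Tendsto (qPoch x q) atTop (𝓝 (qPochInf x q)) := by
  have h := (multipliable_one_add_of_summable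
    (summable_norm_neg_mul_pow x hq)).hasProd.tendsto_prod_nat
  simp only [← sub_eq_add_neg] at h
  exact h

lemma qPochInf_ne_zero (hq : ‖q‖ < 1) (hx : ∀ n : ℕ, 1 - x * q ^ n ≠ 0) : qPochInf x q ≠ 0 := by
  simp only [sub_eq_add_neg] at hx
  have h := tprod_one_add_ne_zero_of_summable hx (summable_norm_neg_mul_pow x hq)
  simp only [← sub_eq_add_neg] at h
  exact h

lemma qPochInf_eq_qPoch_mul (x : ℂ) (hq : ‖q‖ < 1) (m : ℕ) :
    qPochInf x q = qPoch x q m * qPochInf (x * q ^ m) q := by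
  have hshift := (tendsto_qPoch x hq).comp (tendsto_add_atTop_nat m)
  refine tendsto_nhds_unique hshift
    (((tendsto_qPoch (x * q ^ m) hq).const_mul (qPoch x q m)).congr fun n => ?_)
  rw [Function.comp_apply, add_comm n, qPoch_add]

lemma qPochInf_sq (x : ℂ) (hq : ‖q‖ < 1) :
    qPochInf (x ^ 2) (q ^ 2) = qPochInf x q * qPochInf (-x) q :=
  tendsto_nhds_unique (tendsto_qPoch (x ^ 2) (norm_sq_lt_one hq))
    (((tendsto_qPoch x hq).mul (tendsto_qPoch (-x) hq)).congr fun n => (qPoch_sq x q n).symm)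

lemma qPoch_sq_div_qPochInf (hq : ‖q‖ < 1) (hx : ∀ n : ℕ, 1 - x ^ 2 * (q ^ 2) ^ n ≠ 0) (r : ℕ) :
    qPoch (x ^ 2) (q ^ 2) r / qPochInf x q =
      qPochInf (-x) q / qPochInf (x ^ 2 * (q ^ 2) ^ r) (q ^ 2) := by
  have hsplit := qPochInf_eq_qPoch_mul (x ^ 2) (norm_sq_lt_one hq) r
  have hne := qPochInf_ne_zero (norm_sq_lt_one hq) hx
  have hprod := qPochInf_sq x hq
  rw [div_eq_div_iff, ← hsplit, hprod, mul_comm]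
  · exact left_ne_zero_of_mul (hprod ▸ hne)
  · exact right_ne_zero_of_mul (hsplit ▸ hne)

lemma exists_norm_qPoch_le (x : ℂ) (hq : ‖q‖ < 1) : ∃ K : ℝ, ∀ n, ‖qPoch x q n‖ ≤ K := by
  simpa only [Set.forall_mem_range] using
    (Metric.isBounded_range_of_tendsto _ (tendsto_qPoch x hq)).exists_norm_le

lemma exists_norm_inv_qPoch_le (hq : ‖q‖ < 1) (hx : ∀ n : ℕ, 1 - x * q ^ n ≠ 0) :
    ∃ K : ℝ, ∀ n, ‖(qPoch x q n)⁻¹‖ ≤ K := by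
  simpa only [Set.forall_mem_range] using (Metric.isBounded_range_of_tendsto _
    ((tendsto_qPoch x hq).inv₀ (qPochInf_ne_zero hq hx))).exists_norm_le

lemma exists_norm_inv_qPoch_mul_pow_le (hq : ‖q‖ < 1) (hx : ∀ n : ℕ, 1 - x * q ^ n ≠ 0) :
    ∃ K : ℝ, ∀ m n, ‖(qPoch (x * q ^ m) q n)⁻¹‖ ≤ K := by
  obtain ⟨K, hK⟩ := exists_norm_qPoch_le x hq
  obtain ⟨L, hL⟩ := exists_norm_inv_qPoch_le hq hx
  refine ⟨K * L, fun m n => ?_⟩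
  have hm := qPoch_ne_zero hx m
  have hinv : (qPoch (x * q ^ m) q n)⁻¹ = qPoch x q m * (qPoch x q (m + n))⁻¹ := by
    rw [qPoch_add, mul_inv, mul_inv_cancel_left₀ hm]
  rw [hinv, norm_mul]
  exact mul_le_mul (hK m) (hL _) (norm_nonneg _) ((norm_nonneg _).trans (hK m))

end qPochhammer

section Summation

variable {R : Type*} [NormedRing R] [CompleteSpace R]

lemma summable_mul_of_norm_le {ι : Type*} {f g : ι → R} (hf : Summable fun i => ‖f i‖) {K : ℝ}
    (hg : ∀ i, ‖g i‖ ≤ K) : Summable fun i => f i * g i :=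
  Summable.of_norm_bounded (hf.mul_right K) fun i =>
    (norm_mul_le _ _).trans (mul_le_mul_of_nonneg_left (hg i) (norm_nonneg _))

lemma summable_mul_comp_add {ι : Type*} {f : ι → R} {g : ℕ → R} (hf : Summable fun i => ‖f i‖)
    (hg : Summable fun n => ‖g n‖) (s : ι → ℕ) :
    Summable fun p : ι × ℕ => f p.1 * g (s p.1 + p.2) := by
  have hinj : Function.Injective fun p : ι × ℕ => (p.1, s p.1 + p.2) := by
    rintro ⟨i, m⟩ ⟨j, n⟩ h
    obtain ⟨rfl, hmn⟩ := Prod.mk.inj h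
    exact congrArg (Prod.mk i) (Nat.add_left_cancel hmn)
  have hfg := (summable_mul_of_summable_norm hf hg).comp_injective hinj
  exact hfg

lemma tsum_sum_antidiagonal {E : Type*} [NormedAddCommGroup E] [CompleteSpace E] {f : ℕ × ℕ → E}
    (hf : Summable f) : ∑' n, ∑ p ∈ antidiagonal n, f p = ∑' i, ∑' j, f (i, j) := by
  have hsigma := HasAntidiagonal.sigmaAntidiagonalEquivProd.summable_iff.2 hf
  rw [← hf.tsum_prod, ← HasAntidiagonal.sigmaAntidiagonalEquivProd.tsum_eq f]
  refine Eq.trans ?_ (hsigma.tsum_sigma' fun n => (hasSum_fintype _).summable).symm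
  refine tsum_congr fun n => ?_
  rw [tsum_fintype, ← sum_coe_sort (antidiagonal n) f]
  rfl

lemma sum_antidiagonal_sum_antidiagonal {M : Type*} [AddCommMonoid M] (f : ℕ → ℕ → ℕ → M)
    (n : ℕ) :
    ∑ p ∈ antidiagonal n, ∑ r ∈ antidiagonal p.1, f r.1 r.2 p.2 =
      ∑ p ∈ antidiagonal n, ∑ r ∈ antidiagonal p.2, f p.1 r.1 r.2 := by
  rw [sum_sigma', sum_sigma']
  refine sum_nbij' (fun x => ⟨(x.2.1, x.2.2 + x.1.2), (x.2.2, x.1.2)⟩)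
    (fun x => ⟨(x.1.1 + x.2.1, x.2.2), (x.1.1, x.2.1)⟩) ?_ ?_ ?_ ?_ fun _ _ => rfl
  all_goals
    rintro ⟨⟨i, j⟩, ⟨k, l⟩⟩ h
    simp only [mem_sigma, HasAntidiagonal.mem_antidiagonal] at h ⊢
    grind

lemma sum_antidiagonal_sub_telescope {M : Type*} [AddCommGroup M] (g : ℕ → ℕ → M) (n : ℕ) :
    ∑ p ∈ antidiagonal n, (g (p.1 + 1) p.2 - g p.1 (p.2 + 1)) = g (n + 1) 0 - g 0 (n + 1) := by
  have hfst := Nat.sum_antidiagonal_succ (n := n) (f := fun p => g p.1 p.2)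
  have hsnd := Nat.sum_antidiagonal_succ' (n := n) (f := fun p => g p.1 p.2)
  rw [sum_sub_distrib, sub_eq_sub_iff_add_eq_add, add_comm, ← hfst, hsnd]

end Summation

section Weight

variable {q z a b : ℂ}

/-- The Bailey weight `z ^ n q ^ (2 * binom n 2) (a; q⁻¹)_n (b; q⁻¹)_n`. It is encoded as
`z ^ n ∏_{k < n} (q ^ k - a) (q ^ k - b)`, which avoids the negative powers of `q`; for
`a = b = 0` it is `z ^ n q ^ (n * (n - 1))`. -/
noncomputable def baileyWeight (q z a b : ℂ) (n : ℕ) : ℂ :=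
  z ^ n * ∏ k ∈ range n, ((q ^ k - a) * (q ^ k - b))

lemma baileyWeight_zero (q z a b : ℂ) : baileyWeight q z a b 0 = 1 := by
  rw [baileyWeight, pow_zero, prod_range_zero, one_mul]

lemma baileyWeight_succ (q z a b : ℂ) (n : ℕ) :
    baileyWeight q z a b (n + 1) = baileyWeight q z a b n * (z * (q ^ n - a) * (q ^ n - b)) := by
  rw [baileyWeight, baileyWeight, pow_succ, prod_range_succ]
  ring

lemma baileyWeight_mul_left (q z s a b : ℂ) (n : ℕ) :
    baileyWeight q (z * s) a b n = baileyWeight q z a b n * s ^ n := by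
  rw [baileyWeight, baileyWeight, mul_pow]
  ring

lemma baileyWeight_add (q z a b : ℂ) (r n : ℕ) :
    baileyWeight q z (a * q ^ r) (b * q ^ r) (r + n) =
      baileyWeight q z (a * q ^ r) (b * q ^ r) r * baileyWeight q (z * q ^ (2 * r)) a b n := by
  induction n with
  | zero => rw [baileyWeight_zero, mul_one, add_zero]
  | succ n ih =>
    rw [← add_assoc, baileyWeight_succ, ih, baileyWeight_succ]
    ring

lemma two_mul_choose_two_succ (n : ℕ) : 2 * (n + 1).choose 2 = 2 * n.choose 2 + 2 * n := by
  rw [Nat.choose_succ_succ' n 1, Nat.choose_one_right]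
  ring

lemma add_two_mul_choose_two (n : ℕ) : n + 2 * n.choose 2 = n ^ 2 := by
  induction n with
  | zero => rfl
  | succ n ih =>
    rw [two_mul_choose_two_succ]
    linarith

lemma baileyWeight_zero_zero (q z : ℂ) (n : ℕ) :
    baileyWeight q z 0 0 n = z ^ n * q ^ (2 * n.choose 2) := by
  induction n with
  | zero => simp [baileyWeight_zero]
  | succ n ih =>
    rw [baileyWeight_succ, ih, two_mul_choose_two_succ]
    ring

lemma baileyWeight_eq_mul_qPoch (hq0 : q ≠ 0) (z a b : ℂ) (n : ℕ) :
    baileyWeight q z a b n = qPoch a q⁻¹ n * qPoch b q⁻¹ n * baileyWeight q z 0 0 n := by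
  have hpow (x : ℂ) (k : ℕ) : q ^ k - x = q ^ k * (1 - x * q⁻¹ ^ k) := by
    rw [inv_pow]
    field_simp
  induction n with
  | zero => simp only [baileyWeight_zero, qPoch_zero, mul_one]
  | succ n ih =>
    rw [baileyWeight_succ, baileyWeight_succ, ih, qPoch_succ, qPoch_succ, hpow a, hpow b]
    ring

lemma summable_baileyWeight (hq : ‖q‖ < 1) (h : ‖z * a * b‖ < 1) :
    Summable (baileyWeight q z a b) := by
  obtain ⟨ρ, hρ, hρ_lt⟩ := exists_between h
  have hratio : Tendsto (fun n : ℕ => ‖z * (q ^ n - a) * (q ^ n - b)‖) atTop (𝓝 ‖z * a * b‖) := by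
    have hpow := tendsto_pow_atTop_nhds_zero_of_norm_lt_one hq
    have hlim : z * a * b = z * (0 - a) * (0 - b) := by ring
    rw [hlim]
    exact (((hpow.sub_const a).const_mul z).mul (hpow.sub_const b)).norm
  refine summable_of_ratio_norm_eventually_le hρ_lt ?_
  filter_upwards [hratio.eventually (gt_mem_nhds hρ)] with n hn
  rw [baileyWeight_succ, norm_mul, mul_comm]
  exact mul_le_mul_of_nonneg_right hn.le (norm_nonneg _)

lemma summable_baileyWeight_zero_zero (hq : ‖q‖ < 1) (z : ℂ) :
    Summable (baileyWeight q z 0 0) :=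
  summable_baileyWeight hq (by simp only [mul_zero, norm_zero, zero_lt_one])

end Weight

section Gauss

variable {q c a b : ℂ}

/-- The terms of the basic hypergeometric series `₂φ₁(1/a, 1/b; c; q, c a b)`, with the parameters
inverted so that `a = 0` and `b = 0` give its confluent limits. -/
noncomputable def gaussTerm (q c a b : ℂ) (n : ℕ) : ℂ :=
  baileyWeight q c a b n / (qPoch q q n * qPoch c q n)

lemma gaussTerm_zero (q c a b : ℂ) : gaussTerm q c a b 0 = 1 := by
  rw [gaussTerm, baileyWeight_zero, qPoch_zero, qPoch_zero, mul_one, div_one]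

lemma gaussTerm_succ (hq : ∀ n : ℕ, 1 - q * q ^ n ≠ 0) (hc : ∀ n : ℕ, 1 - c * q ^ n ≠ 0) (n : ℕ) :
    (1 - q * q ^ n) * (1 - c * q ^ n) * gaussTerm q c a b (n + 1) =
      c * (q ^ n - a) * (q ^ n - b) * gaussTerm q c a b n := by
  have hq' := hq n
  have hc' := hc n
  have hqn := qPoch_ne_zero hq n
  have hcn := qPoch_ne_zero hc n
  rw [gaussTerm, gaussTerm, baileyWeight_succ, qPoch_succ, qPoch_succ]
  generalize 1 - q * q ^ n = u at *
  generalize 1 - c * q ^ n = v at *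
  field_simp

lemma gaussTerm_mul_self (hc : ∀ n : ℕ, 1 - c * q ^ n ≠ 0) (n : ℕ) :
    (1 - c * q ^ n) * gaussTerm q (c * q) a b n = (1 - c) * q ^ n * gaussTerm q c a b n := by
  have hshift : (1 - c) * qPoch (c * q) q n = qPoch c q n * (1 - c * q ^ n) := by
    rw [← qPoch_succ', qPoch_succ]
  have hcn := qPoch_ne_zero hc n
  have hc' := hc n
  have hcqn : qPoch (c * q) q n ≠ 0 :=
    right_ne_zero_of_mul (hshift ▸ mul_ne_zero hcn hc')
  have hinv : (1 - c * q ^ n) * (qPoch (c * q) q n)⁻¹ = (1 - c) * (qPoch c q n)⁻¹ := by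
    rw [← div_eq_mul_inv, ← div_eq_mul_inv, div_eq_div_iff hcqn hcn, hshift, mul_comm]
  rw [gaussTerm, gaussTerm, baileyWeight_mul_left, div_eq_mul_inv, div_eq_mul_inv, mul_inv, mul_inv]
  linear_combination baileyWeight q c a b n * q ^ n * (qPoch q q n)⁻¹ * hinv

lemma summable_gaussTerm (hq : ‖q‖ < 1) (h : ‖c * a * b‖ < 1) (hc : ∀ n : ℕ, 1 - c * q ^ n ≠ 0) :
    Summable (gaussTerm q c a b) := by
  obtain ⟨K, hK⟩ := exists_norm_inv_qPoch_le hq (one_sub_mul_pow_ne_zero hq hq)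
  obtain ⟨L, hL⟩ := exists_norm_inv_qPoch_le hq hc
  refine (summable_mul_of_norm_le (summable_mul_of_norm_le (summable_baileyWeight hq h).norm
    hK).norm hL).congr fun n => ?_
  rw [gaussTerm, div_eq_mul_inv, mul_inv, mul_assoc]

-- The telescoping certificate is found by the `q`-Zeilberger algorithm.
lemma gaussTerm_sub_gaussTerm_mul_self (hq : ∀ n : ℕ, 1 - q * q ^ n ≠ 0)
    (hc : ∀ n : ℕ, 1 - c * q ^ n ≠ 0) (n : ℕ) :
    (1 - c) * (1 - c * a * b) * gaussTerm q c a b n -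
        (1 - c * a) * (1 - c * b) * gaussTerm q (c * q) a b n =
      (1 - c) * (q ^ (n + 1) - 1) * gaussTerm q c a b (n + 1) -
        (1 - c) * (q ^ n - 1) * gaussTerm q c a b n := by
  refine mul_left_cancel₀ (hc n) ?_
  linear_combination (1 - c) * gaussTerm_succ (a := a) (b := b) hq hc n -
    (1 - c * a) * (1 - c * b) * gaussTerm_mul_self (a := a) (b := b) hc n

lemma tsum_gaussTerm_mul_self (hq : ‖q‖ < 1) (h : ‖c * a * b‖ < 1)
    (hc : ∀ n : ℕ, 1 - c * q ^ n ≠ 0) :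
    (1 - c) * (1 - c * a * b) * ∑' n, gaussTerm q c a b n =
      (1 - c * a) * (1 - c * b) * ∑' n, gaussTerm q (c * q) a b n := by
  have hcq : ∀ n : ℕ, 1 - c * q * q ^ n ≠ 0 := by
    simpa only [pow_one] using one_sub_mul_pow_mul_pow_ne_zero hc 1
  have hq_norm : ‖c * q * a * b‖ < 1 := by
    convert norm_mul_pow_lt_one h hq 1 using 2
    ring
  have hsum := summable_gaussTerm hq h hc
  have hdiff := (hsum.hasSum.mul_left ((1 - c) * (1 - c * a * b))).sub
    ((summable_gaussTerm hq hq_norm hcq).hasSum.mul_left ((1 - c * a) * (1 - c * b)))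
  have hbdry : Tendsto (fun n => (1 - c) * (q ^ n - 1) * gaussTerm q c a b n) atTop (𝓝 0) := by
    simpa only [mul_zero] using
      (((tendsto_pow_atTop_nhds_zero_of_norm_lt_one hq).sub_const 1).const_mul (1 - c)).mul
        hsum.tendsto_atTop_zero
  refine sub_eq_zero.1 (tendsto_nhds_unique hdiff.tendsto_sum_nat (hbdry.congr fun n => ?_))
  simp only [gaussTerm_sub_gaussTerm_mul_self (one_sub_mul_pow_ne_zero hq hq) hc]
  rw [sum_range_sub fun n => (1 - c) * (q ^ n - 1) * gaussTerm q c a b n, pow_zero, sub_self,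
    mul_zero, zero_mul, sub_zero]

lemma qPoch_mul_tsum_gaussTerm (hq : ‖q‖ < 1) (h : ‖c * a * b‖ < 1)
    (hc : ∀ n : ℕ, 1 - c * q ^ n ≠ 0) (m : ℕ) :
    qPoch c q m * qPoch (c * a * b) q m * ∑' n, gaussTerm q c a b n =
      qPoch (c * a) q m * qPoch (c * b) q m * ∑' n, gaussTerm q (c * q ^ m) a b n := by
  induction m with
  | zero => simp only [qPoch_zero, pow_zero, mul_one]
  | succ m ih =>
    have hm : ‖c * q ^ m * a * b‖ < 1 := by
      convert norm_mul_pow_lt_one h hq m using 2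
      ring
    have hcontig := tsum_gaussTerm_mul_self hq hm (one_sub_mul_pow_mul_pow_ne_zero hc m)
    simp only [qPoch_succ]
    rw [pow_succ, ← mul_assoc c]
    linear_combination (1 - c * q ^ m) * (1 - c * a * b * q ^ m) * ih +
      qPoch (c * a) q m * qPoch (c * b) q m * hcontig

lemma continuousAt_gaussTerm_zero (hq : ∀ n : ℕ, 1 - q * q ^ n ≠ 0) (a b : ℂ) (n : ℕ) :
    ContinuousAt (fun c => gaussTerm q c a b n) 0 := by
  simp only [gaussTerm, baileyWeight]
  refine ContinuousAt.div (by fun_prop) ?_ ?_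
  · unfold qPoch
    fun_prop
  · rw [qPoch_zero_left, mul_one]
    exact qPoch_ne_zero hq n

lemma tendsto_tsum_gaussTerm (hq : ‖q‖ < 1) (h : ‖c * a * b‖ < 1)
    (hc : ∀ n : ℕ, 1 - c * q ^ n ≠ 0) :
    Tendsto (fun m : ℕ => ∑' n, gaussTerm q (c * q ^ m) a b n) atTop (𝓝 1) := by
  have hq1 := one_sub_mul_pow_ne_zero hq hq
  obtain ⟨K, hK⟩ := exists_norm_inv_qPoch_le hq hq1
  obtain ⟨L, hL⟩ := exists_norm_inv_qPoch_mul_pow_le hq hc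
  have hpow : Tendsto (fun m : ℕ => c * q ^ m) atTop (𝓝 0) := by
    simpa only [mul_zero] using (tendsto_pow_atTop_nhds_zero_of_norm_lt_one hq).const_mul c
  have hlim : ∑' n, gaussTerm q 0 a b n = 1 := by
    rw [tsum_eq_single 0 fun n hn => ?_, gaussTerm_zero]
    rw [gaussTerm, baileyWeight, zero_pow hn, zero_mul, zero_div]
  rw [← hlim]
  refine tendsto_tsum_of_dominated_convergence
    (((summable_baileyWeight hq h).norm.mul_right K).mul_right L)
    (fun n => (continuousAt_gaussTerm_zero hq1 a b n).tendsto.comp hpow)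
    (Eventually.of_forall fun m n => ?_)
  have hqm : ‖(q ^ m) ^ n‖ ≤ 1 := by
    rw [norm_pow, norm_pow]
    exact pow_le_one₀ (by positivity) (pow_le_one₀ (norm_nonneg _) hq.le)
  rw [gaussTerm, baileyWeight_mul_left, div_eq_mul_inv, mul_inv, ← mul_assoc, norm_mul, norm_mul,
    norm_mul]
  have hK0 := (norm_nonneg _).trans (hK 0)
  gcongr
  · exact mul_le_of_le_one_right (norm_nonneg _) hqm
  · exact hK n
  · exact hL m n

theorem qPochInf_mul_tsum_gaussTerm (hq : ‖q‖ < 1) (h : ‖c * a * b‖ < 1)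
    (hc : ∀ n : ℕ, 1 - c * q ^ n ≠ 0) :
    qPochInf c q * qPochInf (c * a * b) q * ∑' n, gaussTerm q c a b n =
      qPochInf (c * a) q * qPochInf (c * b) q := by
  have hlhs := ((tendsto_qPoch c hq).mul (tendsto_qPoch (c * a * b) hq)).mul_const
    (∑' n, gaussTerm q c a b n)
  have hrhs := ((tendsto_qPoch (c * a) hq).mul (tendsto_qPoch (c * b) hq)).mul
    (tendsto_tsum_gaussTerm hq h hc)
  rw [mul_one] at hrhs
  exact tendsto_nhds_unique hlhs
    (hrhs.congr fun m => (qPoch_mul_tsum_gaussTerm hq h hc m).symm)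

lemma gaussTerm_zero_zero_succ (hq : ∀ n : ℕ, 1 - q * q ^ n ≠ 0)
    (hc : ∀ n : ℕ, 1 - c * q ^ n ≠ 0) (n : ℕ) :
    (1 - c) * ((1 - q * q ^ n) * gaussTerm q c 0 0 (n + 1)) =
      c * q ^ n * gaussTerm q (c * q) 0 0 n := by
  refine mul_left_cancel₀ (hc n) ?_
  linear_combination (1 - c) * gaussTerm_succ (a := 0) (b := 0) hq hc n -
    c * q ^ n * gaussTerm_mul_self (a := 0) (b := 0) hc n

lemma one_sub_pow_mul_sum_antidiagonal_succ (hq : ∀ n : ℕ, 1 - q * q ^ n ≠ 0)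
    (hc : ∀ n : ℕ, 1 - c * q ^ n ≠ 0) (n : ℕ) :
    (1 - q ^ (n + 1)) * ∑ p ∈ antidiagonal (n + 1), gaussTerm q c 0 0 p.1 / qPoch q q p.2 =
      ∑ p ∈ antidiagonal n, gaussTerm q c 0 0 p.1 / qPoch q q p.2 +
        c * q ^ n / (1 - c) *
          ∑ p ∈ antidiagonal n, gaussTerm q (c * q) 0 0 p.1 / qPoch q q p.2 := by
  have hc0 : 1 - c ≠ 0 := by simpa only [pow_zero, mul_one] using hc 0
  have hsplit : ∀ p ∈ antidiagonal (n + 1),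
      (1 - q ^ (n + 1)) * (gaussTerm q c 0 0 p.1 / qPoch q q p.2) =
        gaussTerm q c 0 0 p.1 * ((1 - q ^ p.2) / qPoch q q p.2) +
          (1 - q ^ p.1) * gaussTerm q c 0 0 p.1 * (q ^ p.2 / qPoch q q p.2) := by
    intro p hp
    rw [← HasAntidiagonal.mem_antidiagonal.1 hp]
    ring
  rw [mul_sum, sum_congr rfl hsplit, sum_add_distrib, Nat.sum_antidiagonal_succ',
    Nat.sum_antidiagonal_succ, mul_sum]
  simp only [pow_zero, sub_self, zero_div, zero_mul, mul_zero, zero_add,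
    pow_succ', one_sub_mul_pow_div_qPoch_succ (hq _), mul_one_div]
  refine congrArg _ (sum_congr rfl fun p hp => ?_)
  rw [← HasAntidiagonal.mem_antidiagonal.1 hp,
    eq_div_of_mul_eq hc0 ((mul_comm _ _).trans (gaussTerm_zero_zero_succ hq hc p.1))]
  ring

theorem sum_antidiagonal_gaussTerm_div (hq : ∀ n : ℕ, 1 - q * q ^ n ≠ 0)
    (hc : ∀ n : ℕ, 1 - c * q ^ n ≠ 0) (n : ℕ) :
    ∑ p ∈ antidiagonal n, gaussTerm q c 0 0 p.1 / qPoch q q p.2 =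
      1 / (qPoch q q n * qPoch c q n) := by
  induction n generalizing c with
  | zero => simp [gaussTerm_zero, qPoch_zero]
  | succ n ih =>
    have hcq : ∀ n : ℕ, 1 - c * q * q ^ n ≠ 0 := by
      simpa only [pow_one] using one_sub_mul_pow_mul_pow_ne_zero hc 1
    have hrec := one_sub_pow_mul_sum_antidiagonal_succ hq hc n
    rw [ih hc, ih hcq] at hrec
    have hn : 1 - q ^ (n + 1) ≠ 0 := by simpa only [pow_succ'] using hq n
    have hcqn : 1 / (1 - c) * (1 / qPoch (c * q) q n) = 1 / qPoch c q (n + 1) := by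
      rw [qPoch_succ', one_div_mul_one_div]
    refine mul_left_cancel₀ hn (hrec.trans ?_)
    calc 1 / (qPoch q q n * qPoch c q n) +
          c * q ^ n / (1 - c) * (1 / (qPoch q q n * qPoch (c * q) q n))
        = 1 / qPoch q q n * (1 / qPoch c q n) +
          1 / qPoch q q n * (c * q ^ n * (1 / (1 - c) * (1 / qPoch (c * q) q n))) := by ring
      _ = 1 / qPoch q q n * (1 / qPoch c q (n + 1)) := by
        rw [← one_sub_mul_pow_div_qPoch_succ (hc n), hcqn]
        ring
      _ = _ := by
        rw [← one_sub_mul_pow_div_qPoch_succ (hq n)]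
        ring

end Gauss

section BaileyPair

variable {q A a b : ℂ} {α β δ : ℕ → ℂ}

/-- `(α, β)` is a Bailey pair relative to `A`. The normalisation uses `(A; q)_{n + r + 1}` where
the usual one has `(A q; q)_{n + r}`, so `α` here is `1 - A` times the usual one; the sum over
`r ≤ n` is indexed by `(r, n - r)`. -/
def IsBaileyPair (q A : ℂ) (α β : ℕ → ℂ) : Prop :=
  ∀ n, β n = ∑ p ∈ antidiagonal n, α p.1 / (qPoch q q p.2 * qPoch A q (2 * p.1 + p.2 + 1))

/-- The action on `β` of one step of the Bailey chain, for a pair relative to `z / q` and with both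
parameters of Bailey's lemma sent to infinity. -/
noncomputable def baileyStep (q z : ℂ) (β : ℕ → ℂ) (n : ℕ) : ℂ :=
  ∑ p ∈ antidiagonal n, baileyWeight q z 0 0 p.1 * β p.1 / qPoch q q p.2

lemma baileyWeight_div_eq_mul_gaussTerm (q A a b : ℂ) (r n : ℕ) :
    baileyWeight q (A * q) (a * q ^ r) (b * q ^ r) (r + n) /
        (qPoch q q n * qPoch A q (2 * r + n + 1)) =
      baileyWeight q (A * q) (a * q ^ r) (b * q ^ r) r / qPoch A q (2 * r + 1) *
        gaussTerm q (A * q ^ (2 * r + 1)) a b n := by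
  have hAq : A * q * q ^ (2 * r) = A * q ^ (2 * r + 1) := by ring
  rw [baileyWeight_add, hAq, gaussTerm, add_right_comm, qPoch_add]
  ring

lemma sum_antidiagonal_baileyWeight_div (hq : ∀ n : ℕ, 1 - q * q ^ n ≠ 0)
    (hA : ∀ n : ℕ, 1 - A * q ^ n ≠ 0) (r n : ℕ) :
    ∑ p ∈ antidiagonal n, baileyWeight q (A * q) 0 0 (r + p.1) /
        (qPoch q q p.1 * qPoch A q (2 * r + p.1 + 1)) / qPoch q q p.2 =
      baileyWeight q (A * q) 0 0 r / (qPoch q q n * qPoch A q (2 * r + n + 1)) := by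
  have hweight (i : ℕ) : baileyWeight q (A * q) 0 0 (r + i) /
      (qPoch q q i * qPoch A q (2 * r + i + 1)) =
        baileyWeight q (A * q) 0 0 r / qPoch A q (2 * r + 1) *
          gaussTerm q (A * q ^ (2 * r + 1)) 0 0 i := by
    simpa only [zero_mul] using baileyWeight_div_eq_mul_gaussTerm q A 0 0 r i
  simp only [hweight, mul_div_assoc]
  rw [← mul_sum, sum_antidiagonal_gaussTerm_div hq (one_sub_mul_pow_mul_pow_ne_zero hA _),
    add_right_comm, qPoch_add A q (2 * r + 1)]
  ring

theorem IsBaileyPair.step (h : IsBaileyPair q A α β) (hq : ∀ n : ℕ, 1 - q * q ^ n ≠ 0)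
    (hA : ∀ n : ℕ, 1 - A * q ^ n ≠ 0) :
    IsBaileyPair q A (fun r => baileyWeight q (A * q) 0 0 r * α r)
      (baileyStep q (A * q) β) := by
  intro n
  calc baileyStep q (A * q) β n
      = ∑ p ∈ antidiagonal n, ∑ s ∈ antidiagonal p.1,
          α s.1 * (baileyWeight q (A * q) 0 0 (s.1 + s.2) /
            (qPoch q q s.2 * qPoch A q (2 * s.1 + s.2 + 1)) / qPoch q q p.2) := by
        refine sum_congr rfl fun p _ => ?_
        rw [h p.1, mul_sum, sum_div]
        refine sum_congr rfl fun s hs => ?_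
        rw [HasAntidiagonal.mem_antidiagonal.1 hs]
        ring
    _ = ∑ p ∈ antidiagonal n, ∑ s ∈ antidiagonal p.2,
          α p.1 * (baileyWeight q (A * q) 0 0 (p.1 + s.1) /
            (qPoch q q s.1 * qPoch A q (2 * p.1 + s.1 + 1)) / qPoch q q s.2) :=
        sum_antidiagonal_sum_antidiagonal (fun r i l =>
          α r * (baileyWeight q (A * q) 0 0 (r + i) /
            (qPoch q q i * qPoch A q (2 * r + i + 1)) / qPoch q q l)) n
    _ = ∑ p ∈ antidiagonal n, baileyWeight q (A * q) 0 0 p.1 * α p.1 /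
          (qPoch q q p.2 * qPoch A q (2 * p.1 + p.2 + 1)) := by
        simp only [← mul_sum, sum_antidiagonal_baileyWeight_div hq hA]
        exact sum_congr rfl fun p _ => by ring

theorem IsBaileyPair.iterate (h : IsBaileyPair q A α β) (hq : ∀ n : ℕ, 1 - q * q ^ n ≠ 0)
    (hA : ∀ n : ℕ, 1 - A * q ^ n ≠ 0) (k : ℕ) :
    IsBaileyPair q A (fun r => baileyWeight q (A * q) 0 0 r ^ k * α r)
      ((baileyStep q (A * q))^[k] β) := by
  induction k with
  | zero => simpa only [pow_zero, one_mul, Function.iterate_zero_apply] using h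
  | succ k ih =>
    simpa only [pow_succ', mul_assoc, Function.iterate_succ_apply'] using ih.step hq hA

theorem IsBaileyPair.tsum_mul (h : IsBaileyPair q A α β) (hq : ‖q‖ < 1)
    (hA : ∀ n : ℕ, 1 - A * q ^ n ≠ 0) (hα : Summable α) (hδ : Summable δ) :
    ∑' n, δ n * β n =
      ∑' r, α r * ∑' j, δ (r + j) / (qPoch q q j * qPoch A q (2 * r + j + 1)) := by
  obtain ⟨K, hK⟩ := exists_norm_inv_qPoch_le hq (one_sub_mul_pow_ne_zero hq hq)
  obtain ⟨L, hL⟩ := exists_norm_inv_qPoch_le hq hA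
  have hsum : Summable fun p : ℕ × ℕ =>
      α p.1 * (δ (p.1 + p.2) / (qPoch q q p.2 * qPoch A q (2 * p.1 + p.2 + 1))) := by
    refine (summable_mul_of_norm_le (summable_mul_of_norm_le
      (summable_mul_comp_add hα.norm hδ.norm id).norm
      fun p => hK p.2).norm fun p => hL (2 * p.1 + p.2 + 1)).congr fun p => ?_
    rw [id, div_eq_mul_inv, mul_inv, mul_assoc, mul_assoc]
  calc ∑' n, δ n * β n
      = ∑' n, ∑ p ∈ antidiagonal n,
          α p.1 * (δ (p.1 + p.2) / (qPoch q q p.2 * qPoch A q (2 * p.1 + p.2 + 1))) := by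
        refine tsum_congr fun n => ?_
        rw [h n, mul_sum]
        refine sum_congr rfl fun p hp => ?_
        rw [HasAntidiagonal.mem_antidiagonal.1 hp]
        ring
    _ = ∑' r, α r * ∑' j, δ (r + j) / (qPoch q q j * qPoch A q (2 * r + j + 1)) := by
        simp only [tsum_sum_antidiagonal hsum, tsum_mul_left]

theorem tsum_baileyWeight_div (hq : ‖q‖ < 1) (hq0 : q ≠ 0) (h : ‖A * q * a * b‖ < 1)
    (hA : ∀ n : ℕ, 1 - A * q ^ n ≠ 0) (r : ℕ) :
    ∑' n, baileyWeight q (A * q) a b (r + n) / (qPoch q q n * qPoch A q (2 * r + n + 1)) =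
      baileyWeight q (A * q) a b r *
        (qPochInf (A * q * a * q ^ r) q * qPochInf (A * q * b * q ^ r) q) /
        (qPochInf A q * qPochInf (A * q * a * b) q) := by
  have hqr : q ^ r ≠ 0 := pow_ne_zero r hq0
  obtain ⟨a, rfl⟩ : ∃ a', a = a' * q ^ r := ⟨a / q ^ r, (div_mul_cancel₀ a hqr).symm⟩
  obtain ⟨b, rfl⟩ : ∃ b', b = b' * q ^ r := ⟨b / q ^ r, (div_mul_cancel₀ b hqr).symm⟩
  have hab : A * q * (a * q ^ r) * (b * q ^ r) = A * q ^ (2 * r + 1) * a * b := by ring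
  have ha : A * q * (a * q ^ r) * q ^ r = A * q ^ (2 * r + 1) * a := by ring
  have hb : A * q * (b * q ^ r) * q ^ r = A * q ^ (2 * r + 1) * b := by ring
  rw [hab] at h ⊢
  have hc := one_sub_mul_pow_mul_pow_ne_zero hA (2 * r + 1)
  have hsplit := qPochInf_eq_qPoch_mul A hq (2 * r + 1)
  have hinf := qPochInf_ne_zero hq (one_sub_mul_pow_ne_zero h hq)
  have hcinf := qPochInf_ne_zero hq hc
  have hA0 := qPoch_ne_zero hA (2 * r + 1)
  simp only [baileyWeight_div_eq_mul_gaussTerm]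
  rw [tsum_mul_left, ha, hb, ← qPochInf_mul_tsum_gaussTerm hq h hc, hsplit,
    div_mul_eq_mul_div, div_eq_div_iff hA0 (mul_ne_zero (mul_ne_zero hA0 hcinf) hinf)]
  ring

end BaileyPair

section SeedPair

variable {q A : ℂ}

/-- The coefficients `(-1) ^ r q ^ (r ^ 2) (A ^ 2; q ^ 2)_r / (q ^ 2; q ^ 2)_r`, which become the
`α` of the Bailey pair with `β n = 1 / (q ^ 2; q ^ 2)_n` after multiplication by
`1 - A q ^ (2 * r)`. -/
noncomputable def seedCoeff (q A : ℂ) (r : ℕ) : ℂ :=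
  (-1) ^ r * q ^ r ^ 2 * qPoch (A ^ 2) (q ^ 2) r / qPoch (q ^ 2) (q ^ 2) r

lemma seedCoeff_zero (q A : ℂ) : seedCoeff q A 0 = 1 := by
  simp [seedCoeff, qPoch_zero]

lemma seedCoeff_succ (hq : ∀ n : ℕ, 1 - q * q ^ n ≠ 0) (r : ℕ) :
    seedCoeff q A (r + 1) * (1 - q ^ (2 * (r + 1))) =
      -(seedCoeff q A r * q ^ (2 * r + 1) * (1 - A ^ 2 * q ^ (2 * r))) := by
  have hr := one_sub_sq_mul_sq_pow_ne_zero hq r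
  have hpow : q ^ (2 * (r + 1)) = q ^ 2 * (q ^ 2) ^ r := by ring
  have hdiv := one_sub_mul_pow_div_qPoch_succ hr
  rw [seedCoeff, seedCoeff, hpow, div_mul_eq_mul_div, mul_div_assoc, hdiv, qPoch_succ]
  ring

/-- The telescoping certificate produced by the Wilf-Zeilberger method for the seed pair. -/
noncomputable def seedCertificate (q A : ℂ) (r j : ℕ) : ℂ :=
  -(q ^ j * seedCoeff q A r * (1 - q ^ (2 * r))) / (qPoch q q j * qPoch A q (2 * r + j))

lemma seedCoeff_div_sub (hq : ∀ n : ℕ, 1 - q * q ^ n ≠ 0) (hA : ∀ n : ℕ, 1 - A * q ^ n ≠ 0)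
    (r j : ℕ) :
    (1 - q ^ (2 * (r + j + 1))) * (seedCoeff q A r * (1 - A * q ^ (2 * r)) /
        (qPoch q q (j + 1) * qPoch A q (2 * r + (j + 1) + 1))) -
      seedCoeff q A r * (1 - A * q ^ (2 * r)) / (qPoch q q j * qPoch A q (2 * r + j + 1)) =
    seedCertificate q A (r + 1) j - seedCertificate q A r (j + 1) := by
  have hq' := hq j
  have hA' := hA (2 * r + j + 1)
  have hqj := qPoch_ne_zero hq j
  have hAj := qPoch_ne_zero hA (2 * r + j + 1)
  have hindex : 2 * (r + 1) + j = 2 * r + j + 1 + 1 := by ring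
  rw [seedCertificate, seedCertificate, mul_assoc (q ^ j), seedCoeff_succ hq, hindex, ← add_assoc,
    qPoch_succ q q, qPoch_succ A q (2 * r + j + 1)]
  generalize hu : 1 - q * q ^ j = u at hq' ⊢
  generalize hv : 1 - A * q ^ (2 * r + j + 1) = v at hA' ⊢
  field_simp
  rw [← hu, ← hv]
  ring

lemma seedCoeff_div_last (hA : ∀ n : ℕ, 1 - A * q ^ n ≠ 0) (r : ℕ) :
    (1 - q ^ (2 * r)) * (seedCoeff q A r * (1 - A * q ^ (2 * r)) /
      (qPoch q q 0 * qPoch A q (2 * r + 0 + 1))) = -seedCertificate q A r 0 := by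
  rw [seedCertificate, add_zero, qPoch_zero, one_mul, one_mul, mul_div_assoc,
    one_sub_mul_pow_div_qPoch_succ (hA (2 * r))]
  ring

theorem isBaileyPair_seedCoeff (hq : ∀ n : ℕ, 1 - q * q ^ n ≠ 0)
    (hA : ∀ n : ℕ, 1 - A * q ^ n ≠ 0) :
    IsBaileyPair q A (fun r => seedCoeff q A r * (1 - A * q ^ (2 * r)))
      (fun n => 1 / qPoch (q ^ 2) (q ^ 2) n) := by
  intro n
  induction n with
  | zero =>
    have hA0 : 1 - A ≠ 0 := by simpa only [pow_zero, mul_one] using hA 0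
    simp [seedCoeff_zero, qPoch_zero, qPoch_succ, hA0]
  | succ n ih =>
    have hn := one_sub_sq_mul_sq_pow_ne_zero hq n
    have hpow : q ^ 2 * (q ^ 2) ^ n = q ^ (2 * (n + 1)) := by ring
    have hfirst : seedCertificate q A 0 (n + 1) = 0 := by
      rw [seedCertificate, mul_zero, pow_zero, sub_self, mul_zero, neg_zero, zero_div]
    refine mul_left_cancel₀ hn ?_
    beta_reduce at ih ⊢
    have htele : ∑ p ∈ antidiagonal n, ((1 - q ^ (2 * (n + 1))) *
        (seedCoeff q A p.1 * (1 - A * q ^ (2 * p.1)) /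
          (qPoch q q (p.2 + 1) * qPoch A q (2 * p.1 + (p.2 + 1) + 1))) -
        seedCoeff q A p.1 * (1 - A * q ^ (2 * p.1)) /
          (qPoch q q p.2 * qPoch A q (2 * p.1 + p.2 + 1))) = seedCertificate q A (n + 1) 0 := by
      rw [← sub_zero (seedCertificate q A (n + 1) 0), ← hfirst, ← sum_antidiagonal_sub_telescope]
      refine sum_congr rfl fun p hp => ?_
      rw [← seedCoeff_div_sub hq hA, HasAntidiagonal.mem_antidiagonal.1 hp]
    rw [sum_sub_distrib, ← ih, ← mul_sum] at htele
    rw [← mul_div_assoc, mul_one, one_sub_mul_pow_div_qPoch_succ hn, hpow,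
      Nat.sum_antidiagonal_succ']
    dsimp only
    rw [mul_add, seedCoeff_div_last hA]
    linear_combination -htele

lemma summable_seedCoeff (hq : ‖q‖ < 1) (A : ℂ) : Summable (seedCoeff q A) := by
  have hq2 := norm_sq_lt_one hq
  obtain ⟨K, hK⟩ := exists_norm_qPoch_le (A ^ 2) hq2
  obtain ⟨L, hL⟩ := exists_norm_inv_qPoch_le hq2 (one_sub_mul_pow_ne_zero hq2 hq2)
  refine (summable_mul_of_norm_le (summable_mul_of_norm_le
    (summable_baileyWeight_zero_zero hq (-q)).norm hK).norm hL).congr fun r => ?_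
  rw [baileyWeight_zero_zero, neg_pow, seedCoeff, ← add_two_mul_choose_two, pow_add, div_eq_mul_inv]
  ring

lemma summable_baileyWeight_pow_mul_seedCoeff (hq : ‖q‖ < 1) (A : ℂ) (k : ℕ) :
    Summable fun r =>
      baileyWeight q (A * q) 0 0 r ^ k * (seedCoeff q A r * (1 - A * q ^ (2 * r))) := by
  have hlim : Tendsto (fun r => baileyWeight q (A * q) 0 0 r ^ k * (1 - A * (q ^ 2) ^ r)) atTop
      (𝓝 (0 ^ k * (1 - A * 0))) :=
    ((summable_baileyWeight_zero_zero hq (A * q)).tendsto_atTop_zero.pow k).mul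
      (((tendsto_pow_atTop_nhds_zero_of_norm_lt_one (norm_sq_lt_one hq)).const_mul A).const_sub 1)
  obtain ⟨K, hK⟩ := (Metric.isBounded_range_of_tendsto _ hlim).exists_norm_le
  refine (summable_mul_of_norm_le (summable_seedCoeff hq A).norm
    fun r => hK _ (Set.mem_range_self r)).congr fun r => ?_
  rw [← pow_mul]
  ring

end SeedPair

section Partition

variable {q z : ℂ}

lemma exists_norm_baileyStep_le (hq : ‖q‖ < 1) (z : ℂ) {β : ℕ → ℂ} (hβ : ∃ K, ∀ n, ‖β n‖ ≤ K) :
    ∃ K, ∀ n, ‖baileyStep q z β n‖ ≤ K := by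
  obtain ⟨K, hK⟩ := hβ
  obtain ⟨L, hL⟩ := exists_norm_inv_qPoch_le hq (one_sub_mul_pow_ne_zero hq hq)
  have hK0 := (norm_nonneg _).trans (hK 0)
  have hsum := ((summable_baileyWeight_zero_zero hq z).norm.mul_right K).mul_right L
  refine ⟨_, fun n => (norm_sum_le _ _).trans (le_trans ?_ (hsum.sum_le_tsum (range (n + 1))
    fun i _ => mul_nonneg (mul_nonneg (norm_nonneg _) hK0) ((norm_nonneg _).trans (hL 0))))⟩
  rw [← Nat.sum_antidiagonal_eq_sum_range_succ fun i _ => ‖baileyWeight q z 0 0 i‖ * K * L]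
  refine sum_le_sum fun p _ => ?_
  rw [div_eq_mul_inv, norm_mul, norm_mul]
  gcongr
  · exact hK p.1
  · exact hL p.2

lemma exists_norm_iterate_baileyStep_le (hq : ‖q‖ < 1) (z : ℂ) {β : ℕ → ℂ}
    (hβ : ∃ K, ∀ n, ‖β n‖ ≤ K) (k : ℕ) : ∃ K, ∀ n, ‖(baileyStep q z)^[k] β n‖ ≤ K := by
  induction k with
  | zero => exact hβ
  | succ k ih =>
    rw [Function.iterate_succ']
    exact exists_norm_baileyStep_le hq z ih

lemma tsum_mul_baileyStep (hq : ‖q‖ < 1) (z : ℂ) {β w : ℕ → ℂ} (hβ : ∃ K, ∀ n, ‖β n‖ ≤ K)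
    (hw : Summable w) :
    ∑' n, w n * baileyStep q z β n =
      ∑' m, (∑' t, w (m + t) / qPoch q q t) * (baileyWeight q z 0 0 m * β m) := by
  obtain ⟨K, hK⟩ := hβ
  obtain ⟨L, hL⟩ := exists_norm_inv_qPoch_le hq (one_sub_mul_pow_ne_zero hq hq)
  have hWβ := summable_mul_of_norm_le (summable_baileyWeight_zero_zero hq z).norm hK
  have hsum : Summable fun p : ℕ × ℕ =>
      w (p.1 + p.2) / qPoch q q p.2 * (baileyWeight q z 0 0 p.1 * β p.1) := by
    refine (summable_mul_of_norm_le (summable_mul_comp_add hWβ.norm hw.norm id).norm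
      fun p => hL p.2).congr fun p => ?_
    rw [id]
    ring
  simp only [← tsum_mul_right]
  rw [← tsum_sum_antidiagonal hsum]
  refine tsum_congr fun n => ?_
  rw [baileyStep, mul_sum]
  refine sum_congr rfl fun p hp => ?_
  rw [HasAntidiagonal.mem_antidiagonal.1 hp]
  ring

lemma exists_norm_tsum_div_qPoch_le (hq : ‖q‖ < 1) {w : ℕ → ℂ} (hw : Summable w) :
    ∃ K, ∀ m, ‖∑' t, w (m + t) / qPoch q q t‖ ≤ K := by
  obtain ⟨L, hL⟩ := exists_norm_inv_qPoch_le hq (one_sub_mul_pow_ne_zero hq hq)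
  have hL0 := (norm_nonneg _).trans (hL 0)
  have hsum := hw.norm.mul_right L
  refine ⟨∑' n, ‖w n‖ * L, fun m => ?_⟩
  have hinj := add_right_injective m
  refine (tsum_of_norm_bounded (hsum.comp_injective hinj).hasSum fun t => ?_).trans
    (tsum_comp_le_tsum_of_inj hsum (fun n => mul_nonneg (norm_nonneg _) hL0) hinj)
  rw [div_eq_mul_inv, norm_mul]
  exact mul_le_mul_of_nonneg_left (hL t) (norm_nonneg _)

/-- A partition with one more part is a partition together with the amount by which the new largest
part exceeds the old one. -/
def PartK.consEquiv (k : ℕ) : PartK k × ℕ ≃ PartK (k + 1) where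
  toFun p := ⟨fun i => Nat.casesOn i (p.1.1 0 + p.2) p.1.1, by
    refine ⟨antitone_nat_of_succ_le ?_, ?_⟩
    · rintro (_ | n)
      · exact Nat.le_add_right _ _
      · exact p.1.2.1 (Nat.le_succ n)
    · rintro (_ | i) hi
      · omega
      · exact p.1.2.2 i (by omega)⟩
  invFun l := (⟨fun i => l.1 (i + 1), fun _ _ h => l.2.1 (Nat.succ_le_succ h),
    fun i hi => l.2.2 (i + 1) (Nat.succ_le_succ hi)⟩, l.1 0 - l.1 1)
  left_inv p := Prod.ext (Subtype.ext rfl) (Nat.add_sub_cancel_left _ _)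
  right_inv l := by
    refine Subtype.ext (funext ?_)
    rintro (_ | i)
    · exact Nat.add_sub_cancel' (l.2.1 (Nat.zero_le 1))
    · rfl

/-- A partition with at most one part, as the size of that part. -/
def PartK.singleEquiv : ℕ ≃ PartK 1 where
  toFun n := ⟨fun i => if i = 0 then n else 0, by
    refine ⟨antitone_nat_of_succ_le fun i => ?_, fun i hi => if_neg (by omega)⟩
    simp only [Nat.add_eq_zero_iff, one_ne_zero, and_false, if_false, zero_le]⟩
  invFun l := l.1 0
  left_inv n := rfl
  right_inv l := by
    refine Subtype.ext (funext ?_)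
    rintro (_ | i)
    · rfl
    · exact (l.2.2 (i + 1) (Nat.le_add_left 1 i)).symm

/-- The summand `z ^ |λ| q ^ (2 n(λ)) / ((-q; q)_{λ_k} (q; q)_λ)` of the partition sum, without the
factors depending on the parameters `a` and `b`. -/
noncomputable def partWeight (q z : ℂ) (k : ℕ) (l : PartK k) : ℂ :=
  z ^ wtK k l * q ^ (2 * nK k l) / (qPoch (-q) q (l.1 (k - 1)) * pochK q q k l)

lemma partWeight_singleEquiv (q z : ℂ) (n : ℕ) :
    partWeight q z 1 (PartK.singleEquiv n) =
      baileyWeight q z 0 0 n * (1 / qPoch (q ^ 2) (q ^ 2) n) := by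
  have hfst : (PartK.singleEquiv n).1 0 = n := rfl
  have hsnd : (PartK.singleEquiv n).1 1 = 0 := rfl
  rw [partWeight, wtK, nK, pochK, sum_range_one, sum_range_one, prod_range_one, zero_add, hsnd,
    hfst, Nat.sub_zero, baileyWeight_zero_zero, qPoch_sq, mul_one_div,
    mul_comm (qPoch q q n)]

lemma partWeight_consEquiv (q z : ℂ) (k : ℕ) (μ : PartK (k + 1)) (t : ℕ) :
    partWeight q z (k + 2) (PartK.consEquiv (k + 1) (μ, t)) =
      baileyWeight q z 0 0 (μ.1 0 + t) / qPoch q q t * partWeight q z (k + 1) μ := by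
  set l := PartK.consEquiv (k + 1) (μ, t)
  have hwt : wtK (k + 2) l = wtK (k + 1) μ + (μ.1 0 + t) := sum_range_succ' _ _
  have hn : nK (k + 2) l = nK (k + 1) μ + (μ.1 0 + t).choose 2 := sum_range_succ' _ _
  have hgap : l.1 0 - l.1 (0 + 1) = t := Nat.add_sub_cancel_left _ _
  have hpoch : pochK q q (k + 2) l = pochK q q (k + 1) μ * qPoch q q t := by
    rw [pochK, prod_range_succ', hgap]
    rfl
  have hlast : l.1 (k + 2 - 1) = μ.1 (k + 1 - 1) := rfl
  rw [partWeight, hwt, hn, hpoch, hlast, partWeight, baileyWeight_zero_zero]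
  ring

lemma summable_mul_partWeight (hq : ‖q‖ < 1) {c : ℕ → ℂ}
    (hc : Summable fun n => c n * baileyWeight q z 0 0 n) (k : ℕ) :
    Summable fun l : PartK (k + 1) => c (l.1 0) * partWeight q z (k + 1) l := by
  induction k generalizing c with
  | zero =>
    have hq2 := norm_sq_lt_one hq
    obtain ⟨K, hK⟩ := exists_norm_inv_qPoch_le hq2 (one_sub_mul_pow_ne_zero hq2 hq2)
    refine PartK.singleEquiv.summable_iff.1
      ((summable_mul_of_norm_le hc.norm hK).congr fun n => ?_)
    rw [Function.comp_apply, partWeight_singleEquiv, one_div, ← mul_assoc]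
    rfl
  | succ k ih =>
    obtain ⟨K, hK⟩ := exists_norm_inv_qPoch_le hq (one_sub_mul_pow_ne_zero hq hq)
    have hpart : Summable (partWeight q z (k + 1)) := by
      simpa only [one_mul] using ih (c := fun _ => 1)
        (by simpa only [one_mul] using summable_baileyWeight_zero_zero hq z)
    refine (PartK.consEquiv (k + 1)).summable_iff.1 ((summable_mul_of_norm_le
      (summable_mul_comp_add hpart.norm hc.norm fun μ => μ.1 0).norm
      fun p => hK p.2).congr fun p => ?_)
    rw [Function.comp_apply, partWeight_consEquiv]
    change _ = c (p.1.1 0 + p.2) * _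
    ring

lemma tsum_mul_partWeight_succ (hq : ‖q‖ < 1) {c : ℕ → ℂ}
    (hc : Summable fun n => c n * baileyWeight q z 0 0 n) (k : ℕ) :
    ∑' l : PartK (k + 2), c (l.1 0) * partWeight q z (k + 2) l =
      ∑' μ : PartK (k + 1),
        (∑' t, c (μ.1 0 + t) * baileyWeight q z 0 0 (μ.1 0 + t) / qPoch q q t) *
          partWeight q z (k + 1) μ := by
  have hsum := (PartK.consEquiv (k + 1)).summable_iff.2 (summable_mul_partWeight hq hc (k + 1))
  rw [← (PartK.consEquiv (k + 1)).tsum_eq]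
  refine hsum.tsum_prod.trans (tsum_congr fun μ => ?_)
  rw [← tsum_mul_right]
  refine tsum_congr fun t => ?_
  rw [Function.comp_apply, partWeight_consEquiv]
  change c (μ.1 0 + t) * _ = _
  ring

theorem tsum_mul_partWeight (hq : ‖q‖ < 1) {c : ℕ → ℂ}
    (hc : Summable fun n => c n * baileyWeight q z 0 0 n) (k : ℕ) :
    ∑' l : PartK (k + 1), c (l.1 0) * partWeight q z (k + 1) l =
      ∑' n, c n * baileyWeight q z 0 0 n *
        (baileyStep q z)^[k] (fun m => 1 / qPoch (q ^ 2) (q ^ 2) m) n := by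
  induction k generalizing c with
  | zero =>
    rw [← PartK.singleEquiv.tsum_eq]
    refine tsum_congr fun n => ?_
    rw [partWeight_singleEquiv, ← mul_assoc]
    rfl
  | succ k ih =>
    have hq2 := norm_sq_lt_one hq
    have hseed : ∃ K, ∀ n, ‖1 / qPoch (q ^ 2) (q ^ 2) n‖ ≤ K := by
      simpa only [one_div] using
        exists_norm_inv_qPoch_le hq2 (one_sub_mul_pow_ne_zero hq2 hq2)
    obtain ⟨K, hK⟩ := exists_norm_tsum_div_qPoch_le hq hc
    have hc' := (summable_mul_of_norm_le (summable_baileyWeight_zero_zero hq z).norm hK).congr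
      fun n => mul_comm _ _
    rw [tsum_mul_partWeight_succ hq hc, ih hc', Function.iterate_succ_apply',
      tsum_mul_baileyStep hq z (exists_norm_iterate_baileyStep_le hq z hseed k) hc]
    simp only [mul_assoc]

end Partition

section MasterIdentity

variable {q A a b : ℂ}

lemma baileyWeight_pow_mul_seedCoeff_div_qPochInf (hq : ‖q‖ < 1) (hq0 : q ≠ 0)
    (hA : ∀ n : ℕ, 1 - A ^ 2 * (q ^ 2) ^ n ≠ 0) (k r : ℕ) :
    baileyWeight q (A * q) 0 0 r ^ k * seedCoeff q A r * baileyWeight q (A * q) a b r /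
        qPochInf A q =
      qPochInf (-A) q * ((-1) ^ r * (A * q) ^ ((k + 1) * r) *
        q ^ (r + (2 * (k + 1) + 2) * r.choose 2) * qPoch a q⁻¹ r * qPoch b q⁻¹ r) /
        (qPoch (q ^ 2) (q ^ 2) r * qPochInf (A ^ 2 * (q ^ 2) ^ r) (q ^ 2)) := by
  have hexp : r + (2 * (k + 1) + 2) * r.choose 2 = r ^ 2 + 2 * r.choose 2 * (k + 1) := by
    rw [← add_two_mul_choose_two]
    ring
  have hdiv := qPoch_sq_div_qPochInf hq hA r
  rw [baileyWeight_eq_mul_qPoch hq0 _ a b, baileyWeight_zero_zero, seedCoeff, hexp, pow_add,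
    pow_mul q (2 * r.choose 2), mul_comm (k + 1), pow_mul (A * q)]
  generalize q ^ (2 * r.choose 2) = u, (A * q) ^ r = v
  linear_combination (u * v) ^ (k + 1) * (-1) ^ r * q ^ r ^ 2 * (qPoch (q ^ 2) (q ^ 2) r)⁻¹ *
    qPoch a q⁻¹ r * qPoch b q⁻¹ r * hdiv

theorem tsum_qPoch_mul_partWeight (hq : ‖q‖ < 1) (hq0 : q ≠ 0) (h : ‖A * q * a * b‖ < 1)
    (hA2 : ∀ n : ℕ, 1 - A ^ 2 * (q ^ 2) ^ n ≠ 0) (k : ℕ) :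
    ∑' l : PartK (k + 1),
        qPoch a q⁻¹ (l.1 0) * qPoch b q⁻¹ (l.1 0) * partWeight q (A * q) (k + 1) l =
      qPochInf (-A) q / qPochInf (A * q * a * b) q *
        ∑' r : ℕ, (-1) ^ r * (A * q) ^ ((k + 1) * r) *
          q ^ (r + (2 * (k + 1) + 2) * r.choose 2) * qPoch a q⁻¹ r * qPoch b q⁻¹ r *
          qPochInf (A * q * a * q ^ r) q * qPochInf (A * q * b * q ^ r) q *
          (1 - A * q ^ (2 * r)) /
          (qPoch (q ^ 2) (q ^ 2) r * qPochInf (A ^ 2 * (q ^ 2) ^ r) (q ^ 2)) := by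
  have hq1 := one_sub_mul_pow_ne_zero hq hq
  have hA (n : ℕ) : 1 - A * q ^ n ≠ 0 := by
    refine left_ne_zero_of_mul (b := 1 + A * q ^ n) ?_
    convert hA2 n using 1
    ring
  have hweight := summable_baileyWeight hq h
  have hparts := tsum_mul_partWeight hq
    (hweight.congr fun n => baileyWeight_eq_mul_qPoch hq0 (A * q) a b n) k
  have hpair := (isBaileyPair_seedCoeff hq1 hA).iterate hq1 hA k
  simp only [← baileyWeight_eq_mul_qPoch hq0] at hparts
  rw [hparts, hpair.tsum_mul hq hA (summable_baileyWeight_pow_mul_seedCoeff hq A k) hweight,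
    ← tsum_mul_left]
  refine tsum_congr fun r => ?_
  rw [tsum_baileyWeight_div hq hq0 h hA]
  linear_combination (1 - A * q ^ (2 * r)) * (qPochInf (A * q * a * b) q)⁻¹ *
    qPochInf (A * q * a * q ^ r) q * qPochInf (A * q * b * q ^ r) q *
    baileyWeight_pow_mul_seedCoeff_div_qPochInf (a := a) (b := b) hq hq0 hA2 k r

end MasterIdentity

theorem master_identity_general (k : ℕ) (hk : 1 ≤ k) (q z a b : ℂ) (hq : ‖q‖ < 1) (hq0 : q ≠ 0)
    (habz : ‖a * b * z‖ < 1) (hz : ∀ n : ℕ, z ^ 2 * q ^ (2 * (n : ℤ) - 2) ≠ 1) :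
    ∑' lam : PartK k,
        z ^ wtK k lam * q ^ (2 * nK k lam) *
          qPoch a q⁻¹ (lam.1 0) * qPoch b q⁻¹ (lam.1 0) /
          (qPoch (-q) q (lam.1 (k - 1)) * pochK q q k lam)
      = qPochInf (-z / q) q / qPochInf (a * b * z) q *
          ∑' r : ℕ,
            (-1) ^ r * z ^ (k * r) * q ^ (r + (2 * k + 2) * Nat.choose r 2) *
              qPoch a q⁻¹ r * qPoch b q⁻¹ r *
              qPochInf (a * z * q ^ r) q * qPochInf (b * z * q ^ r) q *
              (1 - z * q ^ (2 * (r : ℤ) - 1)) /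
              (qPoch (q ^ 2) (q ^ 2) r *
                qPochInf (z ^ 2 * q ^ (2 * (r : ℤ) - 2)) (q ^ 2)) := by
  obtain ⟨k, rfl⟩ := Nat.exists_eq_add_of_le' hk
  obtain ⟨A, rfl⟩ : ∃ A, z = A * q := ⟨z / q, (div_mul_cancel₀ z hq0).symm⟩
  have hlin (r : ℕ) : A * q * q ^ (2 * (r : ℤ) - 1) = A * q ^ (2 * r) := by
    rw [mul_assoc, ← zpow_one_add₀ hq0, add_sub_cancel]
    norm_cast
  have hsq (r : ℕ) : (A * q) ^ 2 * q ^ (2 * (r : ℤ) - 2) = A ^ 2 * (q ^ 2) ^ r := by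
    rw [mul_pow, mul_assoc, ← zpow_natCast q 2, ← zpow_add₀ hq0, Nat.cast_two, add_sub_cancel,
      zpow_mul]
    norm_cast
  have hz' (n : ℕ) : 1 - A ^ 2 * (q ^ 2) ^ n ≠ 0 := sub_ne_zero.2 fun h => hz n (by rw [hsq, h])
  have hcomm (x : ℂ) : x * (A * q) = A * q * x := mul_comm _ _
  rw [hcomm, ← mul_assoc] at habz
  convert tsum_qPoch_mul_partWeight hq hq0 habz hz' k using 1
  · refine tsum_congr fun l => ?_
    rw [partWeight]
    ring
  · simp only [hcomm, hlin, hsq, neg_div, mul_div_cancel_right₀ _ hq0, ← mul_assoc]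

/-- Theorem 2 of the paper: for `k ≥ 1`,
`Σ_{l(λ)≤k} z^{|λ|} q^{2n(λ)} (a,b;q^{-1})_{λ_1} / ((-q;q)_{λ_k} (q;q)_λ)
 = ((-z/q;q)_∞/(abz;q)_∞) Σ_{r≥0} (-1)^r z^{kr} q^{r+(2k+2)binom(r,2)}
     (a,b;q^{-1})_r (azq^r,bzq^r;q)_∞ (1-zq^{2r-1}) / ((q^2;q^2)_r (z^2q^{2r-2};q^2)_∞)`. -/
theorem master_identity (k : ℕ) (hk : 1 ≤ k) (q z a b : ℂ) (hq : ‖q‖ < 1) (hq0 : q ≠ 0)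
    (habz : ‖a * b * z‖ < 1) (hz : ∀ m : ℤ, -2 ≤ m → z ^ 2 * q ^ m ≠ 1) :
    ∑' lam : PartK k,
        z ^ wtK k lam * q ^ (2 * nK k lam) *
          qPoch a q⁻¹ (lam.1 0) * qPoch b q⁻¹ (lam.1 0) /
          (qPoch (-q) q (lam.1 (k - 1)) * pochK q q k lam)
      = qPochInf (-z / q) q / qPochInf (a * b * z) q *
          ∑' r : ℕ,
            (-1) ^ r * z ^ (k * r) * q ^ (r + (2 * k + 2) * Nat.choose r 2) *
              qPoch a q⁻¹ r * qPoch b q⁻¹ r *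
              qPochInf (a * z * q ^ r) q * qPochInf (b * z * q ^ r) q *
              (1 - z * q ^ (2 * (r : ℤ) - 1)) /
              (qPoch (q ^ 2) (q ^ 2) r *
                qPochInf (z ^ 2 * q ^ (2 * (r : ℤ) - 2)) (q ^ 2)) :=
  master_identity_general k hk q z a b hq hq0 habz fun n => hz _ (by lia)
end

section
/- For each k ≥ 1 and |q| < 1: Σ_{λ: l(λ) ≤ k} q^{|λ| + n_2(λ) - (λ_1^2 + λ_1)/2} (-q;q)_{λ_1} / ((-q;q)_{λ_k} (q;q)_λ) = ((-q;q)_∞ / (q;q)_∞) · (q^{2k+1}, q^{2k}, q; q^{2k+1})_∞. -/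
/-!
The sum is evaluated by running a Bailey chain, relative to `a = q`, over the parts of the
partition. The factor `1 / ((-q;q)_(λ_k) (q;q)_(λ_k))` is the result of a step of Bailey's lemma
with parameter `ρ = -q` applied to the unit Bailey pair; each part `λ_i` with `2 ≤ i ≤ k`
contributes `q^(λ_i^2 + λ_i) / (q;q)_(λ_(i-1) - λ_i)`, a step with `ρ → ∞`; and `λ_1` contributes a
final step with `ρ = -q`, whose missing factor `1 / (q;q)_(M - λ_1)` becomes constant as `M → ∞`.

On the sequences `α_j(s) = (-q^j)^s q^((j+1) s(s-1)/2) + (-q)^(s+1) q^((j+1) s(s+1)/2)`, of which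
`α_0` belongs to the unit Bailey pair, a step with `ρ = -q` raises `j` by one and a step with
`ρ → ∞` raises it by two. The chain thus ends at `j = 2k`, and the sum of `α_(2k)` is the triple
product `(q^(2k+1), q^(2k), q; q^(2k+1))_∞`.

Bailey's lemma and the finite triple product, which contains the unit Bailey pair, both come from
the same `q`-Pascal recursion for sums of `a(i, j) / ((q;q)_i (q;q)_j)` over `i + j = n`.
-/

namespace PartK

variable {k : ℕ}

/-- The partition `(λ_2, λ_3, …)`. -/
def tail (l : PartK (k + 1)) : PartK k :=
  ⟨fun i ↦ l.1 (i + 1), fun _ _ h ↦ l.2.1 (Nat.succ_le_succ h), fun i h ↦ l.2.2 (i + 1) (by lia)⟩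

/-- The partition `(n, μ_1, μ_2, …)`. -/
def cons (n : ℕ) (μ : PartK k) (h : μ.1 0 ≤ n) : PartK (k + 1) :=
  ⟨fun i ↦ Nat.casesOn i n μ.1,
    antitone_nat_of_succ_le fun i ↦ match i with
      | 0 => h
      | i + 1 => μ.2.1 i.le_succ,
    fun i hi ↦ match i with
      | i + 1 => μ.2.2 i (by lia)⟩

/-- The splitting of a partition into its largest part and the remaining ones. -/
def headTail (l : PartK (k + 1)) : ℕ × PartK k := (l.1 0, l.tail)

lemma headTail_injective : Function.Injective (headTail (k := k)) := by
  intro l m h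
  obtain ⟨h0, htail⟩ := Prod.mk.inj h
  refine Subtype.ext (funext fun i ↦ ?_)
  cases i with
  | zero => exact h0
  | succ i => exact congr_fun (congr_arg Subtype.val htail) i

lemma mem_range_headTail {n : ℕ} {μ : PartK k} (h : μ.1 0 ≤ n) : (n, μ) ∈ Set.range headTail :=
  ⟨cons n μ h, rfl⟩

lemma head_injective : Function.Injective fun l : PartK 1 ↦ l.1 0 := by
  intro l m h
  refine Subtype.ext (funext fun i ↦ ?_)
  cases i with
  | zero => exact h
  | succ i => rw [l.2.2 (i + 1) (by lia), m.2.2 (i + 1) (by lia)]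

lemma head_surjective : Function.Surjective fun l : PartK 1 ↦ l.1 0 := fun n ↦
  ⟨cons (k := 0) n ⟨0, antitone_const, fun _ _ ↦ rfl⟩ n.zero_le, rfl⟩

lemma wtK_succ (l : PartK (k + 1)) : wtK (k + 1) l = wtK k l.tail + l.1 0 :=
  Finset.sum_range_succ' _ _

lemma n2K_succ (l : PartK (k + 1)) : n2K (k + 1) l = n2K k l.tail + l.1 0 ^ 2 :=
  Finset.sum_range_succ' _ _

lemma pochK_succ (x q : ℂ) (l : PartK (k + 1)) :
    pochK x q (k + 1) l = pochK x q k l.tail * qPoch x q (l.1 0 - l.1 1) :=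
  Finset.prod_range_succ' _ _

end PartK

namespace BaileyChain

open Finset Filter Topology

variable {q : ℂ}

/-! ### The `q`-Chu–Vandermonde sum and the finite triple product -/

lemma qPoch_zero (x q : ℂ) : qPoch x q 0 = 1 := by simp [qPoch]

lemma qPoch_succ (x q : ℂ) (n : ℕ) : qPoch x q (n + 1) = qPoch x q n * (1 - x * q ^ n) :=
  prod_range_succ _ _

lemma qPoch_succ' (x q : ℂ) (n : ℕ) : qPoch x q (n + 1) = (1 - x) * qPoch (x * q) q n := by
  simp only [qPoch, prod_range_succ', pow_zero, mul_one, pow_succ', mul_assoc]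
  ring

lemma qPoch_add (x q : ℂ) (m n : ℕ) :
    qPoch x q (m + n) = qPoch x q m * qPoch (x * q ^ m) q n := by
  simp only [qPoch, prod_range_add, pow_add, mul_assoc]

lemma succ_choose_two (n : ℕ) : (n + 1).choose 2 = n.choose 2 + n := by
  rw [Nat.choose_succ_succ', Nat.choose_one_right, add_comm]

lemma add_choose_two (m n : ℕ) : (m + n).choose 2 = m.choose 2 + n.choose 2 + m * n := by
  induction n with
  | zero => simp
  | succ n ih => rw [← add_assoc, succ_choose_two, succ_choose_two, ih]; ring

lemma sq_add_self_eq_two_mul_choose (n : ℕ) : n ^ 2 + n = 2 * (n + 1).choose 2 := by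
  induction n with
  | zero => rfl
  | succ n ih => rw [succ_choose_two, mul_add, ← ih]; ring

/-- The homogeneous `q`-Pochhammer symbol `∏_{i < n} (c q^i - d)`, which is
`(-1)^n d^n (c/d; q)_n` when `d ≠ 0`. -/
noncomputable def homQPoch (c d q : ℂ) (n : ℕ) : ℂ := ∏ i ∈ range n, (c * q ^ i - d)

lemma homQPoch_succ (c d q : ℂ) (n : ℕ) :
    homQPoch c d q (n + 1) = homQPoch c d q n * (c * q ^ n - d) :=
  prod_range_succ _ _

lemma homQPoch_mul_mul (t c d q : ℂ) (n : ℕ) :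
    homQPoch (t * c) (t * d) q n = t ^ n * homQPoch c d q n := by
  induction n with
  | zero => simp [homQPoch]
  | succ n ih => rw [homQPoch_succ, homQPoch_succ, ih]; ring

lemma homQPoch_zero_left (d q : ℂ) (n : ℕ) : homQPoch 0 d q n = (-d) ^ n := by
  simp [homQPoch]

lemma homQPoch_zero_right (c q : ℂ) (n : ℕ) : homQPoch c 0 q n = c ^ n * q ^ n.choose 2 := by
  induction n with
  | zero => simp [homQPoch]
  | succ n ih => rw [homQPoch_succ, ih, succ_choose_two]; ring

lemma homQPoch_neg_one_right (c q : ℂ) (n : ℕ) : homQPoch c (-1) q n = qPoch (-c) q n :=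
  prod_congr rfl fun _ _ ↦ by ring

lemma homQPoch_add (c d q : ℂ) (m n : ℕ) :
    homQPoch c d q (m + n) = homQPoch c d q m * homQPoch (c * q ^ m) d q n := by
  simp only [homQPoch, prod_range_add, pow_add, mul_assoc]

lemma one_sub_pow_succ_ne_zero (hq : ∀ n, qPoch q q n ≠ 0) (n : ℕ) : 1 - q ^ (n + 1) ≠ 0 := by
  have h := hq (n + 1)
  rw [qPoch_succ, ← pow_succ'] at h
  exact right_ne_zero_of_mul h

lemma one_sub_pow_mul_sum_antidiagonal_succ (hq : ∀ n, qPoch q q n ≠ 0) (a : ℕ → ℕ → ℂ) (n : ℕ) :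
    (1 - q ^ (n + 1)) * ∑ p ∈ antidiagonal (n + 1), a p.1 p.2 / (qPoch q q p.1 * qPoch q q p.2) =
      ∑ p ∈ antidiagonal n, (q ^ p.2 * a (p.1 + 1) p.2 + a p.1 (p.2 + 1)) /
        (qPoch q q p.1 * qPoch q q p.2) := by
  have cancel (m : ℕ) : (1 - q ^ (m + 1)) / qPoch q q (m + 1) = (qPoch q q m)⁻¹ := by
    rw [qPoch_succ, ← pow_succ', div_mul_cancel_right₀ (one_sub_pow_succ_ne_zero hq m)]
  -- `1 - q^(i+j) = q^j (1 - q^i) + (1 - q^j)`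
  have split : ∀ p ∈ antidiagonal (n + 1),
      (1 - q ^ (n + 1)) * (a p.1 p.2 / (qPoch q q p.1 * qPoch q q p.2)) =
        (1 - q ^ p.1) / qPoch q q p.1 * (q ^ p.2 * a p.1 p.2 / qPoch q q p.2) +
          (1 - q ^ p.2) / qPoch q q p.2 * (a p.1 p.2 / qPoch q q p.1) := by
    intro p hp
    rw [← mem_antidiagonal.mp hp, pow_add]
    ring
  rw [mul_sum, sum_congr rfl split, sum_add_distrib, Nat.sum_antidiagonal_succ,
    Nat.sum_antidiagonal_succ' (f := fun p ↦ (1 - q ^ p.2) / qPoch q q p.2 * _)]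
  simp only [cancel, pow_zero, sub_self, zero_div, zero_mul, zero_add]
  rw [← sum_add_distrib]
  exact sum_congr rfl fun p _ ↦ by ring

theorem q_chu_vandermonde (hq : ∀ n, qPoch q q n ≠ 0) (c d : ℂ) (n : ℕ) :
    ∑ p ∈ antidiagonal n, q ^ p.2.choose 2 * homQPoch c d q p.2 * qPoch (c * q ^ p.2) q p.1 /
      (qPoch q q p.1 * qPoch q q p.2) = qPoch d q n / qPoch q q n := by
  induction n generalizing c d with
  | zero => simp [qPoch, homQPoch]
  | succ n ih =>
    have step (i j : ℕ) :
        q ^ j * (q ^ j.choose 2 * homQPoch c d q j * qPoch (c * q ^ j) q (i + 1)) +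
            q ^ (j + 1).choose 2 * homQPoch c d q (j + 1) * qPoch (c * q ^ (j + 1)) q i =
          (1 - d) * (q ^ j.choose 2 * homQPoch (q * c) (q * d) q j *
            qPoch (q * c * q ^ j) q i) := by
      rw [homQPoch_succ, homQPoch_mul_mul, qPoch_succ', succ_choose_two, pow_add,
        show c * q ^ j * q = q * c * q ^ j by ring, show c * q ^ (j + 1) = q * c * q ^ j by ring]
      ring
    have h := one_sub_pow_succ_ne_zero hq n
    apply mul_left_cancel₀ h
    rw [one_sub_pow_mul_sum_antidiagonal_succ hq fun i j ↦
      q ^ j.choose 2 * homQPoch c d q j * qPoch (c * q ^ j) q i]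
    simp only [step, mul_div_assoc]
    rw [← mul_sum]
    simp only [← mul_div_assoc]
    rw [ih (q * c) (q * d), qPoch_succ', qPoch_succ, ← pow_succ', mul_comm d q]
    field_simp [hq n]

/-- The term at `s = i - n ∈ ℤ` of the theta series `∑ (-w)^s Q^(s(s-1)/2)`, with negative powers of
`w` written through `z = Q/w`. The subtractions are truncated on purpose: at most one of `i - n`
and `n - i` is nonzero. -/
def thetaCoeff (z w Q : ℂ) (i n : ℕ) : ℂ :=
  (-w) ^ (i - n) * (-z) ^ (n - i) * Q ^ ((i - n).choose 2 + (n - i).choose 2)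

lemma thetaCoeff_add_left (z w Q : ℂ) (n s : ℕ) :
    thetaCoeff z w Q (n + s) n = (-w) ^ s * Q ^ s.choose 2 := by
  simp [thetaCoeff]

lemma thetaCoeff_add_right (z w Q : ℂ) (i s : ℕ) :
    thetaCoeff z w Q i (i + s) = (-z) ^ s * Q ^ s.choose 2 := by
  simp [thetaCoeff]

lemma pow_mul_thetaCoeff_succ {z w Q : ℂ} (hQ : z * w = Q) {i j m n : ℕ} (h : i + j = m + n) :
    Q ^ j * thetaCoeff z w Q (i + 1) n = -w * Q ^ m * thetaCoeff z w Q i n := by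
  rcases le_or_gt n i with hni | hin
  · obtain ⟨s, rfl⟩ := Nat.exists_eq_add_of_le hni
    obtain rfl : m = s + j := by lia
    rw [add_assoc, thetaCoeff_add_left, thetaCoeff_add_left, succ_choose_two]
    ring
  · obtain ⟨s, rfl⟩ := Nat.exists_eq_add_of_lt hin
    obtain rfl : j = m + (s + 1) := by lia
    rw [add_right_comm i s 1, thetaCoeff_add_right, add_right_comm, add_assoc,
      thetaCoeff_add_right, succ_choose_two, ← hQ]
    ring

theorem finite_jacobi_triple_product {z w Q : ℂ} (hQ : z * w = Q) (h0 : ∀ n, qPoch Q Q n ≠ 0)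
    (m n : ℕ) :
    ∑ p ∈ antidiagonal (m + n), thetaCoeff z w Q p.1 n / (qPoch Q Q p.1 * qPoch Q Q p.2) =
      qPoch w Q m * qPoch z Q n / qPoch Q Q (m + n) := by
  induction m with
  | zero =>
    rw [zero_add, qPoch_zero, one_mul, ← q_chu_vandermonde h0 0 z n]
    refine sum_congr rfl fun p hp ↦ ?_
    rw [← mem_antidiagonal.mp hp, thetaCoeff_add_right, homQPoch_zero_left, zero_mul,
      show qPoch 0 Q p.1 = 1 by simp [qPoch]]
    ring
  | succ m ih =>
    have step : ∀ p ∈ antidiagonal (m + n),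
        (Q ^ p.2 * thetaCoeff z w Q (p.1 + 1) n + thetaCoeff z w Q p.1 n) /
            (qPoch Q Q p.1 * qPoch Q Q p.2) =
          (1 - w * Q ^ m) * (thetaCoeff z w Q p.1 n / (qPoch Q Q p.1 * qPoch Q Q p.2)) := by
      intro p hp
      rw [pow_mul_thetaCoeff_succ hQ (mem_antidiagonal.mp hp)]
      ring
    have h := one_sub_pow_succ_ne_zero h0 (m + n)
    rw [Nat.add_right_comm]
    apply mul_left_cancel₀ h
    rw [one_sub_pow_mul_sum_antidiagonal_succ h0 fun i _ ↦ thetaCoeff z w Q i n,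
      sum_congr rfl step, ← mul_sum, ih, qPoch_succ, qPoch_succ _ _ (m + n), ← pow_succ']
    field_simp [h0 (m + n)]

/-! ### Bailey's lemma -/

/-- The member `β` of the Bailey pair `(α / (1 - a), β)` relative to `a`, written with
`(a;q)_(n+r+1) = (1 - a) (aq;q)_(n+r)`. -/
noncomputable def baileySum (a q : ℂ) (α : ℕ → ℂ) (n : ℕ) : ℂ :=
  ∑ p ∈ antidiagonal n, α p.1 / (qPoch q q p.2 * qPoch a q (n + p.1 + 1))

/-- The weight `(-1)^r q^(r(r-1)/2) (ρ;q)_r (a q/ρ)^r` of Bailey's lemma with free parameter `ρ`,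
written through `y = q/ρ` so that the limit `ρ → ∞` becomes the value `y = 0`. -/
noncomputable def baileyWeight (a y q : ℂ) (r : ℕ) : ℂ :=
  a ^ r * q ^ r.choose 2 * homQPoch q y q r

lemma baileyWeight_add (a y q : ℂ) (s k : ℕ) :
    baileyWeight a y q (s + k) = baileyWeight a y q s *
      (q ^ k.choose 2 * homQPoch (a * q ^ (2 * s + 1)) (a * y * q ^ s) q k) := by
  rw [show a * q ^ (2 * s + 1) = a * q ^ s * (q * q ^ s) by ring,
    show a * y * q ^ s = a * q ^ s * y by ring, homQPoch_mul_mul]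
  simp only [baileyWeight, homQPoch_add, add_choose_two]
  ring

lemma sum_antidiagonal_baileyWeight (hq : ∀ n, qPoch q q n ≠ 0) {a y : ℂ}
    (ha : ∀ n, qPoch a q n ≠ 0) (hay : ∀ n, qPoch (a * y) q n ≠ 0) (s m : ℕ) :
    ∑ p ∈ antidiagonal m, baileyWeight a y q (s + p.2) /
        (qPoch q q p.1 * (qPoch q q p.2 * qPoch a q (2 * s + p.2 + 1))) =
      qPoch (a * y) q (s + m) * (baileyWeight a y q s / qPoch (a * y) q s) /
        (qPoch q q m * qPoch a q (2 * s + m + 1)) := by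
  have key := q_chu_vandermonde hq (a * q ^ (2 * s + 1)) (a * y * q ^ s) m
  have term : ∀ p ∈ antidiagonal m, baileyWeight a y q (s + p.2) /
        (qPoch q q p.1 * (qPoch q q p.2 * qPoch a q (2 * s + p.2 + 1))) =
      baileyWeight a y q s / qPoch a q (2 * s + m + 1) *
        (q ^ p.2.choose 2 * homQPoch (a * q ^ (2 * s + 1)) (a * y * q ^ s) q p.2 *
          qPoch (a * q ^ (2 * s + 1) * q ^ p.2) q p.1 / (qPoch q q p.1 * qPoch q q p.2)) := by
    intro p hp
    have h := ha (2 * s + p.2 + 1 + p.1)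
    have hm : 2 * s + m + 1 = 2 * s + p.2 + 1 + p.1 := by have := mem_antidiagonal.mp hp; lia
    rw [qPoch_add] at h
    rw [baileyWeight_add, hm, qPoch_add a q _ p.1,
      show a * q ^ (2 * s + 1) * q ^ p.2 = a * q ^ (2 * s + p.2 + 1) by ring]
    field_simp [hq p.1, hq p.2, left_ne_zero_of_mul h, right_ne_zero_of_mul h]
  rw [sum_congr rfl term, ← mul_sum, key, qPoch_add (a * y)]
  field_simp [hay s]

lemma sum_antidiagonal_assoc {M : Type*} [AddCommMonoid M] (F : ℕ → ℕ → ℕ → M)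
    (n : ℕ) :
    ∑ p ∈ antidiagonal n, ∑ u ∈ antidiagonal p.1, F u.1 u.2 p.2 =
      ∑ p ∈ antidiagonal n, ∑ u ∈ antidiagonal p.2, F p.1 u.1 u.2 := by
  simp only [sum_sigma']
  refine sum_nbij' (fun x ↦ ⟨(x.2.1, x.2.2 + x.1.2), (x.2.2, x.1.2)⟩)
    (fun x ↦ ⟨(x.1.1 + x.2.1, x.2.2), (x.1.1, x.2.1)⟩) ?_ ?_ ?_ ?_ ?_ <;>
  simp only [mem_sigma, HasAntidiagonal.mem_antidiagonal] <;> grind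

theorem bailey_lemma (hq : ∀ n, qPoch q q n ≠ 0) {a y : ℂ} (ha : ∀ n, qPoch a q n ≠ 0)
    (hay : ∀ n, qPoch (a * y) q n ≠ 0) (α : ℕ → ℂ) (n : ℕ) :
    ∑ p ∈ antidiagonal n, baileyWeight a y q p.1 * baileySum a q α p.1 / qPoch q q p.2 =
      qPoch (a * y) q n *
        baileySum a q (fun r ↦ baileyWeight a y q r / qPoch (a * y) q r * α r) n := by
  have expand : ∀ p ∈ antidiagonal n,
      baileyWeight a y q p.1 * baileySum a q α p.1 / qPoch q q p.2 =
        ∑ u ∈ antidiagonal p.1, α u.1 * (baileyWeight a y q (u.1 + u.2) /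
          (qPoch q q p.2 * (qPoch q q u.2 * qPoch a q (2 * u.1 + u.2 + 1)))) := by
    intro p _
    rw [baileySum, mul_sum, sum_div]
    refine sum_congr rfl fun u hu ↦ ?_
    rw [← mem_antidiagonal.mp hu, show u.1 + u.2 + u.1 + 1 = 2 * u.1 + u.2 + 1 by ring]
    ring
  rw [sum_congr rfl expand, sum_antidiagonal_assoc fun s k l ↦
    α s * (baileyWeight a y q (s + k) / (qPoch q q l * (qPoch q q k * qPoch a q (2 * s + k + 1)))),
    baileySum, mul_sum]
  refine sum_congr rfl fun p hp ↦ ?_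
  rw [← mul_sum, ← Nat.sum_antidiagonal_swap]
  simp only [Prod.fst_swap, Prod.snd_swap]
  rw [sum_antidiagonal_baileyWeight hq ha hay, ← mem_antidiagonal.mp hp,
    show 2 * p.1 + p.2 + 1 = p.1 + p.2 + p.1 + 1 by ring]
  ring

/-! ### Theta functions along the Bailey chain -/

/-- The terms at `s` and `-s - 1` of the theta series `∑ (-w)^s Q^(s(s-1)/2)`, `Q = z w`, added
so that the bilateral series becomes a sum over `ℕ`. -/
def pairedTheta (z w : ℂ) (s : ℕ) : ℂ :=
  (-w) ^ s * (z * w) ^ s.choose 2 + (-z) ^ (s + 1) * (z * w) ^ (s + 1).choose 2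

lemma pow_choose_mul_pairedTheta (q : ℂ) (j r : ℕ) :
    q ^ (r + 1).choose 2 * pairedTheta q (q ^ j) r = pairedTheta q (q ^ (j + 1)) r := by
  simp only [pairedTheta, succ_choose_two]
  ring

theorem baileySum_pairedTheta {z w Q : ℂ} (hQ : z * w = Q) (h0 : ∀ n, qPoch Q Q n ≠ 0) (n : ℕ) :
    baileySum Q Q (pairedTheta z w) n =
      qPoch w Q n * qPoch z Q (n + 1) / qPoch Q Q (2 * n + 1) := by
  rw [two_mul, add_assoc, ← finite_jacobi_triple_product hQ h0,
    Nat.sum_antidiagonal_eq_sum_range_succ_mk, show (n + (n + 1)).succ = n + 1 + (n + 1) by lia,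
    sum_range_add, ← sum_range_reflect, ← sum_add_distrib, baileySum,
    Nat.sum_antidiagonal_eq_sum_range_succ_mk]
  refine sum_congr rfl fun s hs ↦ ?_
  obtain ⟨t, rfl⟩ := Nat.exists_eq_add_of_le (mem_range_succ_iff.mp hs)
  have upper : thetaCoeff z w Q (s + t + 1 + s) (s + t + 1) = (-w) ^ s * Q ^ s.choose 2 :=
    thetaCoeff_add_left ..
  have lower : thetaCoeff z w Q t (s + t + 1) = (-z) ^ (s + 1) * Q ^ (s + 1).choose 2 := by
    rw [show s + t + 1 = t + (s + 1) by lia, thetaCoeff_add_right]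
  simp only [show s + t + 1 - 1 - s = t by lia, show s + t - s = t by lia,
    show s + t + (s + t + 1) - t = s + t + s + 1 by lia,
    show s + t + 1 + s = s + t + s + 1 by lia,
    show s + t + (s + t + 1) - (s + t + s + 1) = t by lia] at upper ⊢
  rw [upper, lower, pairedTheta, hQ]
  ring

theorem sum_antidiagonal_pow_mul_baileySum_pairedTheta (hq : ∀ n, qPoch q q n ≠ 0) (j n : ℕ) :
    ∑ p ∈ antidiagonal n,
        q ^ (p.1 ^ 2 + p.1) * baileySum q q (pairedTheta q (q ^ j)) p.1 / qPoch q q p.2 =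
      baileySum q q (pairedTheta q (q ^ (j + 2))) n := by
  have hzero (n : ℕ) : qPoch (q * 0) q n = 1 := by simp [qPoch]
  have weight (r : ℕ) : baileyWeight q 0 q r = q ^ (r ^ 2 + r) := by
    rw [baileyWeight, homQPoch_zero_right, sq_add_self_eq_two_mul_choose, succ_choose_two]
    ring
  have key := bailey_lemma hq (y := 0) hq (fun n ↦ hzero n ▸ one_ne_zero) (pairedTheta q (q ^ j)) n
  simp only [weight, hzero, one_mul, div_one] at key
  rw [key]
  congr 1 with r
  rw [← pow_choose_mul_pairedTheta, ← pow_choose_mul_pairedTheta, sq_add_self_eq_two_mul_choose]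
  ring

theorem sum_antidiagonal_qPoch_neg_mul_baileySum_pairedTheta (hq : ∀ n, qPoch q q n ≠ 0)
    (hq' : ∀ n, qPoch (-q) q n ≠ 0) (j n : ℕ) :
    ∑ p ∈ antidiagonal n, q ^ (p.1 + 1).choose 2 * qPoch (-q) q p.1 *
        baileySum q q (pairedTheta q (q ^ j)) p.1 / qPoch q q p.2 =
      qPoch (-q) q n * baileySum q q (pairedTheta q (q ^ (j + 1))) n := by
  have weight (r : ℕ) :
      baileyWeight q (-1) q r = q ^ (r + 1).choose 2 * qPoch (-q) q r := by
    rw [baileyWeight, homQPoch_neg_one_right, succ_choose_two]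
    ring
  have key := bailey_lemma hq (y := -1) hq (by simpa) (pairedTheta q (q ^ j)) n
  simp only [weight, mul_neg_one, mul_div_cancel_right₀ _ (hq' _),
    pow_choose_mul_pairedTheta] at key
  exact key

lemma baileySum_pairedTheta_one (hq : ∀ n, qPoch q q n ≠ 0) (n : ℕ) :
    baileySum q q (pairedTheta q 1) n = if n = 0 then 1 else 0 := by
  rw [baileySum_pairedTheta (mul_one q) hq]
  rcases n with - | n
  · simp [hq, qPoch_zero]
  · simp [qPoch_succ' 1]

lemma baileySum_pairedTheta_self (hq : ∀ n, qPoch q q n ≠ 0) (hq' : ∀ n, qPoch (-q) q n ≠ 0)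
    (n : ℕ) : baileySum q q (pairedTheta q (q ^ 1)) n = (qPoch (-q) q n * qPoch q q n)⁻¹ := by
  have key := sum_antidiagonal_qPoch_neg_mul_baileySum_pairedTheta hq hq' 0 n
  simp only [pow_zero, baileySum_pairedTheta_one hq] at key
  rw [Nat.sum_antidiagonal_eq_sum_range_succ_mk, sum_range_succ'] at key
  simp only [Nat.add_eq_zero_iff, one_ne_zero, and_false, ↓reduceIte, mul_zero, zero_div,
    sum_const_zero, zero_add, Nat.choose_succ_self, pow_zero, qPoch_zero, mul_one, tsub_zero,
    one_div, pow_one] at key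
  rw [mul_inv, key, pow_one, inv_mul_cancel_left₀ (hq' n)]

/-! ### Passing to the limit -/

lemma exists_norm_le_of_tendsto {E : Type*} [SeminormedAddCommGroup E] {f : ℕ → E} {a : E}
    (h : Tendsto f atTop (𝓝 a)) : ∃ C, ∀ n, ‖f n‖ ≤ C := by
  obtain ⟨C, hC⟩ := h.norm.bddAbove_range
  exact ⟨C, fun n ↦ hC (Set.mem_range_self n)⟩

lemma norm_pow_lt_one {𝕜 : Type*} [NormedDivisionRing 𝕜] {x : 𝕜} (hx : ‖x‖ < 1) {n : ℕ}
    (hn : n ≠ 0) : ‖x ^ n‖ < 1 := by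
  rw [norm_pow]
  exact pow_lt_one₀ (norm_nonneg x) hx hn

lemma summable_pow_of_le {𝕜 : Type*} [NormedDivisionRing 𝕜] [CompleteSpace 𝕜] {x : 𝕜}
    (hx : ‖x‖ < 1) {e : ℕ → ℕ} (he : ∀ n, n ≤ e n) : Summable fun n ↦ x ^ e n :=
  .of_norm_bounded (summable_geometric_of_lt_one (norm_nonneg x) hx) fun n ↦ by
    rw [norm_pow]
    exact pow_le_pow_of_le_one (norm_nonneg x) hx.le (he n)

section NormedRing

variable {ι R : Type*} [NormedRing R] [CompleteSpace R] {d : ι → R} {C : ℝ}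

lemma summable_mul_of_norm_le {g : ι → R} (hd : Summable (‖d ·‖)) (hg : ∀ i, ‖g i‖ ≤ C) :
    Summable fun i ↦ d i * g i :=
  .of_norm_bounded (hd.mul_right C) fun i ↦
    (norm_mul_le _ _).trans (mul_le_mul_of_nonneg_left (hg i) (norm_nonneg _))

lemma tendsto_tsum_mul {β : Type*} {l : Filter β} {g : β → ι → R} {a : R}
    (hd : Summable (‖d ·‖)) (hC : ∀ n i, ‖g n i‖ ≤ C) (hg : ∀ i, Tendsto (g · i) l (𝓝 a)) :
    Tendsto (fun n ↦ ∑' i, d i * g n i) l (𝓝 ((∑' i, d i) * a)) := by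
  rw [← hd.of_norm.tsum_mul_right]
  exact tendsto_tsum_of_dominated_convergence (hd.mul_right C) (fun i ↦ (hg i).const_mul (d i))
    (.of_forall fun n i ↦
      (norm_mul_le _ _).trans (mul_le_mul_of_nonneg_left (hC n i) (norm_nonneg _)))

end NormedRing

lemma summable_norm_mul_pow (hq : ‖q‖ < 1) (x : ℂ) : Summable fun k : ℕ ↦ ‖-(x * q ^ k)‖ := by
  simpa using (summable_geometric_of_lt_one (norm_nonneg q) hq).mul_left ‖x‖

lemma one_sub_mul_pow_ne_zero {x : ℂ} (hx : ‖x‖ < 1) (hq : ‖q‖ < 1) (k : ℕ) :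
    1 - x * q ^ k ≠ 0 := by
  refine sub_ne_zero.mpr fun h ↦ ?_
  have hlt : ‖x * q ^ k‖ < 1 := by
    rw [norm_mul, norm_pow]
    exact mul_lt_one_of_nonneg_of_lt_one_left (norm_nonneg x) hx
      (pow_le_one₀ (norm_nonneg q) hq.le)
  simp [← h] at hlt

lemma qPoch_ne_zero {x : ℂ} (hx : ‖x‖ < 1) (hq : ‖q‖ < 1) (n : ℕ) : qPoch x q n ≠ 0 :=
  prod_ne_zero_iff.mpr fun k _ ↦ one_sub_mul_pow_ne_zero hx hq k

lemma qPochInf_ne_zero {x : ℂ} (hx : ‖x‖ < 1) (hq : ‖q‖ < 1) : qPochInf x q ≠ 0 := by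
  have h := tprod_one_add_ne_zero_of_summable (f := fun k : ℕ ↦ -(x * q ^ k))
    (by simpa only [← sub_eq_add_neg] using one_sub_mul_pow_ne_zero hx hq)
    (summable_norm_mul_pow hq x)
  simpa only [qPochInf, ← sub_eq_add_neg] using h

lemma tendsto_qPoch (hq : ‖q‖ < 1) (x : ℂ) :
    Tendsto (qPoch x q) atTop (𝓝 (qPochInf x q)) := by
  have h := (multipliable_one_add_of_summable (summable_norm_mul_pow hq x)).tendsto_prod_tprod_nat
  simp only [← sub_eq_add_neg] at h
  exact h

/-- `1 / (q;q)_(n-r)`, with the convention that it vanishes for `r > n`. -/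
noncomputable def invPochSub (q : ℂ) (n r : ℕ) : ℂ :=
  if r ≤ n then (qPoch q q (n - r))⁻¹ else 0

lemma invPochSub_of_le {n r : ℕ} (h : r ≤ n) : invPochSub q n r = (qPoch q q (n - r))⁻¹ :=
  if_pos h

lemma invPochSub_of_lt {n r : ℕ} (h : n < r) : invPochSub q n r = 0 :=
  if_neg h.not_ge

lemma tendsto_inv_qPoch_self (hq : ‖q‖ < 1) :
    Tendsto (fun n ↦ (qPoch q q n)⁻¹) atTop (𝓝 (qPochInf q q)⁻¹) :=
  (tendsto_qPoch hq q).inv₀ (qPochInf_ne_zero hq hq)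

lemma tendsto_invPochSub (hq : ‖q‖ < 1) (r : ℕ) :
    Tendsto (invPochSub q · r) atTop (𝓝 (qPochInf q q)⁻¹) := by
  refine ((tendsto_inv_qPoch_self hq).comp (tendsto_sub_atTop_nat r)).congr' ?_
  filter_upwards [eventually_ge_atTop r] with n hn
  exact (invPochSub_of_le hn).symm

lemma exists_norm_invPochSub_le (hq : ‖q‖ < 1) : ∃ C, ∀ n r, ‖invPochSub q n r‖ ≤ C := by
  obtain ⟨C, hC⟩ := exists_norm_le_of_tendsto (tendsto_inv_qPoch_self hq)
  refine ⟨C, fun n r ↦ ?_⟩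
  rcases le_or_gt r n with h | h
  · rw [invPochSub_of_le h]
    exact hC _
  · rw [invPochSub_of_lt h, norm_zero]
    exact (norm_nonneg _).trans (hC 0)

lemma tsum_mul_invPochSub (c : ℕ → ℂ) (n : ℕ) :
    ∑' r, c r * invPochSub q n r = ∑ p ∈ antidiagonal n, c p.1 / qPoch q q p.2 := by
  rw [Nat.sum_antidiagonal_eq_sum_range_succ fun r s ↦ c r / qPoch q q s,
    tsum_eq_sum (s := range n.succ)]
  · refine sum_congr rfl fun r hr ↦ ?_
    rw [invPochSub_of_le (mem_range_succ_iff.mp hr), div_eq_mul_inv]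
  · intro r hr
    rw [invPochSub_of_lt (by simpa [Nat.succ_le_iff] using hr), mul_zero]

lemma baileySum_eq_tsum (a q : ℂ) (α : ℕ → ℂ) (n : ℕ) :
    baileySum a q α n = ∑' r, α r * ((qPoch a q (n + r + 1))⁻¹ * invPochSub q n r) := by
  simp only [← mul_assoc]
  rw [tsum_mul_invPochSub, baileySum]
  exact sum_congr rfl fun p _ ↦ by ring

lemma tendsto_baileySum (hq : ‖q‖ < 1) {a : ℂ} (ha : ‖a‖ < 1) {α : ℕ → ℂ} (hα : Summable α) :
    Tendsto (baileySum a q α) atTop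
      (𝓝 ((∑' r, α r) * ((qPochInf a q)⁻¹ * (qPochInf q q)⁻¹))) := by
  have hinv : Tendsto (fun n ↦ (qPoch a q n)⁻¹) atTop (𝓝 (qPochInf a q)⁻¹) :=
    (tendsto_qPoch hq a).inv₀ (qPochInf_ne_zero ha hq)
  obtain ⟨A, hA⟩ := exists_norm_le_of_tendsto hinv
  obtain ⟨C, hC⟩ := exists_norm_invPochSub_le hq
  refine (tendsto_tsum_mul hα.norm (C := A * C) (fun n r ↦ ?_) fun r ↦ ?_).congr fun n ↦
    (baileySum_eq_tsum a q α n).symm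
  · rw [norm_mul]
    exact mul_le_mul (hA _) (hC n r) (norm_nonneg _) ((norm_nonneg _).trans (hA 0))
  · exact (hinv.comp (tendsto_add_atTop_nat (r + 1))).mul (tendsto_invPochSub hq r)

lemma summable_pairedTheta {z w : ℂ} (hz : ‖z‖ < 1) (hw : ‖w‖ < 1) :
    Summable (pairedTheta z w) := by
  have bound {x : ℂ} (hx : ‖x‖ < 1) :
      Summable fun s ↦ (-x) ^ s * (z * w) ^ s.choose 2 := by
    refine .of_norm_bounded (summable_geometric_of_lt_one (norm_nonneg x) hx) fun s ↦ ?_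
    rw [norm_mul, norm_pow, norm_pow, norm_neg, norm_mul]
    exact mul_le_of_le_one_right (by positivity)
      (pow_le_one₀ (by positivity) (mul_le_one₀ hz.le (norm_nonneg w) hw.le))
  exact (bound hw).add ((summable_nat_add_iff 1).mpr (bound hz))

theorem jacobi_triple_product {z w : ℂ} (hz : ‖z‖ < 1) (hw : ‖w‖ < 1) :
    ∑' s, pairedTheta z w s =
      qPochInf (z * w) (z * w) * qPochInf z (z * w) * qPochInf w (z * w) := by
  have hQ : ‖z * w‖ < 1 := by
    rw [norm_mul]
    exact mul_lt_one_of_nonneg_of_lt_one_left (norm_nonneg z) hz hw.le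
  have hne := qPochInf_ne_zero hQ hQ
  have hodd : Tendsto (fun n ↦ 2 * n + 1) atTop atTop :=
    (tendsto_add_atTop_nat 1).comp (tendsto_id.const_mul_atTop' two_pos)
  have hprod := (((tendsto_qPoch hQ w).mul
    ((tendsto_qPoch hQ z).comp (tendsto_add_atTop_nat 1))).div
    ((tendsto_qPoch hQ (z * w)).comp hodd) hne).congr fun n ↦
    (baileySum_pairedTheta rfl (qPoch_ne_zero hQ hQ) n).symm
  have h := tendsto_nhds_unique (tendsto_baileySum hQ hQ (summable_pairedTheta hz hw)) hprod
  field_simp at h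
  rw [h]
  ring

/-! ### Peeling off the largest part -/

/-- The factor `q^(λ_1(λ_1+1)/2) (-q;q)_(λ_1)` of the summand in (16), as a function of
`n = λ_1`. -/
noncomputable def headWeight (q : ℂ) (n : ℕ) : ℂ := q ^ (n + 1).choose 2 * qPoch (-q) q n

/-- The factor of the summand in (16) that remains after removing
`headWeight q λ_1`, for partitions with at most `k + 1` parts. -/
noncomputable def tailWeight (q : ℂ) (k : ℕ) (l : PartK (k + 1)) : ℂ :=
  q ^ (wtK k l.tail + n2K k l.tail) / (qPoch (-q) q (l.1 k) * pochK q q (k + 1) l)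

lemma summand_eq_headWeight_mul_tailWeight (q : ℂ) (k : ℕ) (l : PartK (k + 1)) :
    q ^ (wtK (k + 1) l + n2K (k + 1) l - (l.1 0 ^ 2 + l.1 0) / 2) * qPoch (-q) q (l.1 0) /
        (qPoch (-q) q (l.1 k) * pochK q q (k + 1) l) =
      headWeight q (l.1 0) * tailWeight q k l := by
  have hexp : wtK (k + 1) l + n2K (k + 1) l - (l.1 0 ^ 2 + l.1 0) / 2 =
      (l.1 0 + 1).choose 2 + (wtK k l.tail + n2K k l.tail) := by
    have := sq_add_self_eq_two_mul_choose (l.1 0)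
    rw [PartK.wtK_succ, PartK.n2K_succ]
    lia
  rw [hexp, pow_add, headWeight, tailWeight]
  ring

lemma tailWeight_zero (q : ℂ) (l : PartK 1) :
    tailWeight q 0 l = (qPoch (-q) q (l.1 0) * qPoch q q (l.1 0))⁻¹ := by
  simp [tailWeight, wtK, n2K, pochK, l.2.2 1 le_rfl]

lemma tailWeight_succ (q : ℂ) (k : ℕ) (l : PartK (k + 2)) :
    tailWeight q (k + 1) l =
      invPochSub q (l.1 0) (l.1 1) * (q ^ (l.1 1 ^ 2 + l.1 1) * tailWeight q k l.tail) := by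
  rw [tailWeight, tailWeight, invPochSub_of_le (l.2.1 zero_le_one), PartK.pochK_succ,
    PartK.wtK_succ, PartK.n2K_succ]
  simp only [PartK.tail, zero_add, pow_add]
  ring

/-- The term at `(λ_1, (λ_2, λ_3, …))` of `∑_λ g(λ_1) tailWeight q (k + 1) λ`, extended by zero to
the pairs that do not form a partition. -/
noncomputable def splitTerm (q : ℂ) (k : ℕ) (g : ℕ → ℂ) (p : ℕ × PartK (k + 1)) : ℂ :=
  g p.1 * (invPochSub q p.1 (p.2.1 0) * (q ^ (p.2.1 0 ^ 2 + p.2.1 0) * tailWeight q k p.2))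

lemma splitTerm_headTail (q : ℂ) (k : ℕ) (g : ℕ → ℂ) (l : PartK (k + 2)) :
    splitTerm q k g l.headTail = g (l.1 0) * tailWeight q (k + 1) l := by
  rw [tailWeight_succ]
  rfl

lemma support_splitTerm_subset (q : ℂ) (k : ℕ) (g : ℕ → ℂ) :
    Function.support (splitTerm q k g) ⊆ Set.range PartK.headTail := by
  intro p hp
  refine PartK.mem_range_headTail (not_lt.mp fun h ↦ hp ?_)
  rw [splitTerm, invPochSub_of_lt h, zero_mul, mul_zero]

lemma summable_splitTerm (hq : ‖q‖ < 1) {k : ℕ} {g : ℕ → ℂ} (hg : Summable g)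
    (htail : Summable fun l : PartK (k + 1) ↦ q ^ (l.1 0 ^ 2 + l.1 0) * tailWeight q k l) :
    Summable (splitTerm q k g) := by
  obtain ⟨C, hC⟩ := exists_norm_invPochSub_le hq
  refine (summable_mul_of_norm_le (hg.norm.mul_norm htail.norm)
    fun p ↦ hC p.1 (p.2.1 0)).congr fun p ↦ ?_
  rw [splitTerm]
  ring

lemma summable_mul_tailWeight (hq : ‖q‖ < 1) (k : ℕ) {g : ℕ → ℂ} (hg : Summable g) :
    Summable fun l : PartK (k + 1) ↦ g (l.1 0) * tailWeight q k l := by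
  induction k generalizing g with
  | zero =>
    have hq' : ‖-q‖ < 1 := by rwa [norm_neg]
    have hlim := ((tendsto_qPoch hq (-q)).mul (tendsto_qPoch hq q)).inv₀
      (mul_ne_zero (qPochInf_ne_zero hq' hq) (qPochInf_ne_zero hq hq))
    obtain ⟨C, hC⟩ := exists_norm_le_of_tendsto hlim
    have h : Summable fun n ↦ g n * (qPoch (-q) q n * qPoch q q n)⁻¹ :=
      summable_mul_of_norm_le hg.norm hC
    simp only [tailWeight_zero]
    exact h.comp_injective PartK.head_injective
  | succ k ih =>
    have htail := ih (summable_pow_of_le hq fun n ↦ Nat.le_add_left n (n ^ 2))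
    have hsplit := summable_splitTerm hq hg htail
    exact (hsplit.comp_injective PartK.headTail_injective).congr (splitTerm_headTail q k g)

theorem tsum_mul_tailWeight (hq : ‖q‖ < 1) (k : ℕ) {g : ℕ → ℂ} (hg : Summable g) :
    ∑' l : PartK (k + 1), g (l.1 0) * tailWeight q k l =
      ∑' n, g n * baileySum q q (pairedTheta q (q ^ (2 * k + 1))) n := by
  have hne := qPoch_ne_zero hq hq
  induction k generalizing g with
  | zero =>
    have hne' := qPoch_ne_zero (x := -q) (by rwa [norm_neg]) hq
    simp only [mul_zero, zero_add, tailWeight_zero, baileySum_pairedTheta_self hne hne']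
    exact PartK.head_injective.tsum_eq
      (f := fun n ↦ g n * (qPoch (-q) q n * qPoch q q n)⁻¹)
      fun n _ ↦ PartK.head_surjective n
  | succ k ih =>
    have hpow : Summable fun r : ℕ ↦ q ^ (r ^ 2 + r) :=
      summable_pow_of_le hq fun n ↦ Nat.le_add_left n (n ^ 2)
    obtain ⟨C, hC⟩ := exists_norm_invPochSub_le hq
    have inner (n : ℕ) : ∑' μ : PartK (k + 1),
        q ^ (μ.1 0 ^ 2 + μ.1 0) * invPochSub q n (μ.1 0) * tailWeight q k μ =
          baileySum q q (pairedTheta q (q ^ (2 * (k + 1) + 1))) n := by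
      rw [ih (summable_mul_of_norm_le hpow.norm (hC n)),
        show 2 * (k + 1) + 1 = 2 * k + 1 + 2 by ring,
        ← sum_antidiagonal_pow_mul_baileySum_pairedTheta hne, ← tsum_mul_invPochSub fun r ↦
          q ^ (r ^ 2 + r) * baileySum q q (pairedTheta q (q ^ (2 * k + 1))) r]
      exact tsum_congr fun r ↦ mul_right_comm ..
    have htail := summable_mul_tailWeight hq k hpow
    have hsplit := summable_splitTerm hq hg htail
    calc ∑' l : PartK (k + 2), g (l.1 0) * tailWeight q (k + 1) l
        = ∑' p, splitTerm q k g p := by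
          rw [← PartK.headTail_injective.tsum_eq (support_splitTerm_subset q k g)]
          simp only [splitTerm_headTail]
      _ = ∑' n, ∑' μ : PartK (k + 1), splitTerm q k g (n, μ) := hsplit.tsum_prod
      _ = ∑' n, g n * baileySum q q (pairedTheta q (q ^ (2 * (k + 1) + 1))) n := by
          refine tsum_congr fun n ↦ ?_
          rw [← inner, ← tsum_mul_left]
          exact tsum_congr fun μ ↦ by rw [splitTerm]; ring

lemma summable_headWeight (hq : ‖q‖ < 1) : Summable (headWeight q) := by
  obtain ⟨C, hC⟩ := exists_norm_le_of_tendsto (tendsto_qPoch hq (-q))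
  refine summable_mul_of_norm_le (summable_pow_of_le hq fun n ↦ ?_).norm hC
  rw [succ_choose_two]
  exact Nat.le_add_left n _

lemma tsum_headWeight_mul_invPochSub_mul_tailWeight (hq : ‖q‖ < 1) (k m : ℕ) :
    ∑' l : PartK (k + 1), headWeight q (l.1 0) * tailWeight q k l * invPochSub q m (l.1 0) =
      qPoch (-q) q m * baileySum q q (pairedTheta q (q ^ (2 * (k + 1)))) m := by
  obtain ⟨C, hC⟩ := exists_norm_invPochSub_le hq
  have h := tsum_mul_tailWeight hq k (summable_mul_of_norm_le (summable_headWeight hq).norm (hC m))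
  simp only [mul_right_comm _ (invPochSub q m _)] at h
  rw [h, tsum_mul_invPochSub]
  exact sum_antidiagonal_qPoch_neg_mul_baileySum_pairedTheta (qPoch_ne_zero hq hq)
    (qPoch_ne_zero (by rwa [norm_neg]) hq) (2 * k + 1) m

theorem tsum_headWeight_mul_tailWeight (hq : ‖q‖ < 1) (k : ℕ) :
    ∑' l : PartK (k + 1), headWeight q (l.1 0) * tailWeight q k l =
      qPochInf (-q) q / qPochInf q q * ∑' s, pairedTheta q (q ^ (2 * (k + 1))) s := by
  obtain ⟨C, hC⟩ := exists_norm_invPochSub_le hq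
  have hleft := tendsto_tsum_mul (summable_mul_tailWeight hq k (summable_headWeight hq)).norm
    (fun m l ↦ hC m (l.1 0)) fun l ↦ tendsto_invPochSub hq (l.1 0)
  have hw : ‖q ^ (2 * (k + 1))‖ < 1 := norm_pow_lt_one hq (by lia)
  have hright := (tendsto_qPoch hq (-q)).mul
    (tendsto_baileySum hq hq (summable_pairedTheta hq hw))
  have h := tendsto_nhds_unique (hleft.congr fun m ↦
    tsum_headWeight_mul_invPochSub_mul_tailWeight hq k m) hright
  have hne := qPochInf_ne_zero hq hq
  field_simp at h ⊢
  exact h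

end BaileyChain

/-- Identity (16): for `k ≥ 1`, `|q| < 1`,
`Σ_{l(λ)≤k} q^{|λ|+n_2(λ)-(λ_1^2+λ_1)/2} (-q;q)_{λ_1} / ((-q;q)_{λ_k} (q;q)_λ)
  = ((-q;q)_∞/(q;q)_∞) (q^{2k+1},q^{2k},q;q^{2k+1})_∞`. -/
theorem rr_type_16 (k : ℕ) (hk : 1 ≤ k) (q : ℂ) (hq : ‖q‖ < 1) :
    ∑' lam : PartK k,
        q ^ (wtK k lam + n2K k lam - (lam.1 0 ^ 2 + lam.1 0) / 2) *
          qPoch (-q) q (lam.1 0) /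
          (qPoch (-q) q (lam.1 (k - 1)) * pochK q q k lam)
      = qPochInf (-q) q / qPochInf q q *
          (qPochInf (q ^ (2 * k + 1)) (q ^ (2 * k + 1)) *
            qPochInf (q ^ (2 * k)) (q ^ (2 * k + 1)) *
            qPochInf q (q ^ (2 * k + 1))) := by
  obtain ⟨k, rfl⟩ := Nat.exists_eq_add_of_le' hk
  have hw : ‖q ^ (2 * (k + 1))‖ < 1 := BaileyChain.norm_pow_lt_one hq (by lia)
  calc
    _ = ∑' l : PartK (k + 1), BaileyChain.headWeight q (l.1 0) * BaileyChain.tailWeight q k l :=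
      tsum_congr fun l ↦ BaileyChain.summand_eq_headWeight_mul_tailWeight q k l
    _ = qPochInf (-q) q / qPochInf q q * ∑' s, BaileyChain.pairedTheta q (q ^ (2 * (k + 1))) s :=
      BaileyChain.tsum_headWeight_mul_tailWeight hq k
    _ = _ := by
      rw [BaileyChain.jacobi_triple_product hq hw, ← pow_succ']
      ring
end
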